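/- Let F be a field, R a finite-dimensional F-algebra, and N a finitely generated subgroup of the unit group Rˣ. Then N contains no non-cyclic free subgroup if and only if N satisfies a group identity, i.e., there exist m ≥ 1 and a nonidentity element w of the free group on generators x_1,...,x_m such that w(c_1,...,c_m) = 1 for all c_1,...,c_m ∈ N. -/

import Mathlib

namespace TitsAlt

/-- A representation satisfies an identity. -/
def IdRep {Γ M : Type*} [Group Γ] [Monoid M] (ρ : Γ →* M) : Prop :=
  ∃ (α : Type) (w : FreeGroup α), w ≠ 1 ∧ ∀ c : α → Γ, ρ (FreeGroup.lift c w) = 1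

theorem isReduced_map {α β : Type*} {f : α → β} (hf : Function.Injective f)
    {L : List (α × Bool)} (hL : FreeGroup.IsReduced L) :
    FreeGroup.IsReduced (L.map fun x => (f x.1, x.2)) := by
  unfold FreeGroup.IsReduced at *
  rw [List.isChain_map]
  refine hL.imp ?_
  intro a b h h'
  exact h (hf h')

theorem comm_ne {α β : Type} {u : FreeGroup α} {v : FreeGroup β} (hu : u ≠ 1) (hv : v ≠ 1) :
    FreeGroup.map Sum.inl u * FreeGroup.map Sum.inr v ≠
      (FreeGroup.map Sum.inr v * FreeGroup.map Sum.inl u : FreeGroup (α ⊕ β)) := by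
  classical
  intro h
  have hu' : u.toWord ≠ [] := fun h => hu (FreeGroup.toWord_eq_nil_iff.1 h)
  have hv' : v.toWord ≠ [] := fun h => hv (FreeGroup.toWord_eq_nil_iff.1 h)
  rw [← FreeGroup.mk_toWord (x := u), ← FreeGroup.mk_toWord (x := v), FreeGroup.map.mk,
    FreeGroup.map.mk, FreeGroup.mul_mk, FreeGroup.mul_mk] at h
  have hru := isReduced_map (β := α ⊕ β) Sum.inl_injective
    (FreeGroup.isReduced_toWord (x := u))
  have hrv := isReduced_map (β := α ⊕ β) Sum.inr_injective
    (FreeGroup.isReduced_toWord (x := v))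
  have h1 : FreeGroup.IsReduced (u.toWord.map (fun x => ((Sum.inl x.1 : α ⊕ β), x.2)) ++
      v.toWord.map (fun x => ((Sum.inr x.1 : α ⊕ β), x.2))) := by
    unfold FreeGroup.IsReduced at *
    rw [List.isChain_append]
    refine ⟨hru, hrv, ?_⟩
    intro x hx y hy hxy
    have hx := List.mem_of_getLast? hx
    have hy := List.mem_of_mem_head? hy
    simp only [List.mem_map] at hx hy
    obtain ⟨a, -, rfl⟩ := hx
    obtain ⟨b, -, rfl⟩ := hy
    simp at hxy
  have h2 : FreeGroup.IsReduced (v.toWord.map (fun x => ((Sum.inr x.1 : α ⊕ β), x.2)) ++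
      u.toWord.map (fun x => ((Sum.inl x.1 : α ⊕ β), x.2))) := by
    unfold FreeGroup.IsReduced at *
    rw [List.isChain_append]
    refine ⟨hrv, hru, ?_⟩
    intro x hx y hy hxy
    have hx := List.mem_of_getLast? hx
    have hy := List.mem_of_mem_head? hy
    simp only [List.mem_map] at hx hy
    obtain ⟨a, -, rfl⟩ := hx
    obtain ⟨b, -, rfl⟩ := hy
    simp at hxy
  have h3 := congrArg FreeGroup.toWord h
  rw [FreeGroup.toWord_mk, FreeGroup.toWord_mk, h1.reduce_eq, h2.reduce_eq] at h3
  obtain ⟨a, l, hal⟩ := List.exists_cons_of_ne_nil hu'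
  obtain ⟨b, l', hbl⟩ := List.exists_cons_of_ne_nil hv'
  rw [hal, hbl] at h3
  simp at h3

theorem isReduced_flatMap {α : Type*} (k : ℕ)
    {L : List (α × Bool)} (hL : FreeGroup.IsReduced L) :
    FreeGroup.IsReduced (L.flatMap fun x => List.replicate (k + 1) x) := by
  unfold FreeGroup.IsReduced at *
  have hrep : ∀ (k : ℕ) (a : α × Bool), List.IsChain (fun a b : α × Bool => a.1 = b.1 → a.2 = b.2)
      (List.replicate k a) := by
    intro k a
    exact List.isChain_replicate_of_rel k (fun _ => rfl)
  induction L with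
  | nil => simp
  | cons a l ih =>
    rw [List.flatMap_cons, List.isChain_append]
    refine ⟨hrep _ _, ih hL.tail, ?_⟩
    intro x hx y hy
    have hx := List.eq_of_mem_replicate (List.mem_of_getLast? hx)
    subst hx
    cases l with
    | nil => simp at hy
    | cons b l =>
      rw [List.flatMap_cons, List.replicate_succ] at hy
      simp at hy
      subst hy
      exact (List.isChain_cons_cons.1 hL).1

theorem pow_subst_ne {α : Type} {w : FreeGroup α} (hw : w ≠ 1) (k : ℕ) :
    FreeGroup.lift (fun i => (FreeGroup.of i : FreeGroup α) ^ (k + 1)) w ≠ 1 := by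
  classical
  intro h
  have hw' : w.toWord ≠ [] := fun h => hw (FreeGroup.toWord_eq_nil_iff.1 h)
  have key : ∀ L : List (α × Bool), FreeGroup.lift (fun i => (FreeGroup.of i : FreeGroup α) ^ (k + 1))
      (FreeGroup.mk L) = FreeGroup.mk (L.flatMap fun x => List.replicate (k + 1) x) := by
    intro L
    induction L with
    | nil => simp [FreeGroup.one_eq_mk.symm]
    | cons a l ih =>
      rw [List.flatMap_cons, ← FreeGroup.mul_mk, ← ih, ← List.singleton_append,
        ← FreeGroup.mul_mk, map_mul]
      congr 1
      have h1 : ∀ (a : α × Bool) (k : ℕ), (FreeGroup.mk (List.replicate k a)) =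
          (FreeGroup.mk [a]) ^ k := by
        intro a k
        induction k with
        | zero => simp [FreeGroup.one_eq_mk.symm]
        | succ k ih => rw [List.replicate_succ, ← List.singleton_append, ← FreeGroup.mul_mk, ih, pow_succ']
      rw [h1]
      obtain ⟨a, b⟩ := a
      cases b
      · have : (FreeGroup.mk [(a, false)]) = (FreeGroup.of a)⁻¹ := rfl
        rw [this, map_inv, FreeGroup.lift_apply_of, inv_pow]
      · have : (FreeGroup.mk [(a, true)]) = (FreeGroup.of a) := rfl
        rw [this, FreeGroup.lift_apply_of]
  rw [← FreeGroup.mk_toWord (x := w), key] at h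
  have h3 := congrArg FreeGroup.toWord h
  rw [FreeGroup.toWord_mk, (isReduced_flatMap k FreeGroup.isReduced_toWord).reduce_eq] at h3
  obtain ⟨a, l, hal⟩ := List.exists_cons_of_ne_nil hw'
  rw [hal, List.flatMap_cons, List.replicate_succ] at h3
  simp at h3

theorem IdRep.of_finiteIndex {Γ M : Type*} [Group Γ] [Monoid M] (ρ : Γ →* M)
    (H : Subgroup Γ) [H.FiniteIndex] (h : IdRep (ρ.comp H.subtype)) : IdRep ρ := by
  obtain ⟨α, w, hw, hid⟩ := h
  obtain ⟨k, hk⟩ : ∃ k, H.normalCore.index = k + 1 :=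
    Nat.exists_eq_succ_of_ne_zero Subgroup.FiniteIndex.index_ne_zero
  refine ⟨α, _, pow_subst_ne hw k, fun c => ?_⟩
  have hm : ∀ i, c i ^ (k + 1) ∈ H := fun i => by
    rw [← hk]; exact Subgroup.normalCore_le H (Subgroup.pow_index_mem _ _)
  have := hid (fun i => ⟨c i ^ (k + 1), hm i⟩)
  rw [MonoidHom.comp_apply] at this
  rw [← this]
  congr 1
  rw [← MonoidHom.comp_apply, ← MonoidHom.comp_apply]
  congr 1
  ext i
  simp

/-- Combining two identities and an abelian-modulo condition. -/
theorem IdRep.of_two {Γ M M₁ M₂ : Type*} [Group Γ] [Monoid M] [Monoid M₁] [Monoid M₂]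
    (ρ : Γ →* M) (ρ₁ : Γ →* M₁) (ρ₂ : Γ →* M₂) (h₁ : IdRep ρ₁) (h₂ : IdRep ρ₂)
    (hab : ∀ a b : Γ, ρ₁ a = 1 → ρ₂ a = 1 → ρ₁ b = 1 → ρ₂ b = 1 → ρ a * ρ b = ρ b * ρ a) :
    IdRep ρ := by
  obtain ⟨α, u, hu, hid⟩ := h₁
  obtain ⟨β, v, hv, hid'⟩ := h₂
  have hc := comm_ne hu hv
  set x := FreeGroup.map Sum.inl u with hx
  set y := (FreeGroup.map Sum.inr v : FreeGroup (α ⊕ β)) with hy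
  have hz : x * y * x⁻¹ * y⁻¹ ≠ 1 := by
    intro h
    apply hc
    rw [mul_inv_eq_one, mul_inv_eq_iff_eq_mul] at h
    exact h
  set z := x * y * x⁻¹ * y⁻¹ with hzdef
  have hc' := comm_ne hz hz
  set x' := (FreeGroup.map Sum.inl z : FreeGroup ((α ⊕ β) ⊕ (α ⊕ β))) with hx'
  set y' := (FreeGroup.map Sum.inr z : FreeGroup ((α ⊕ β) ⊕ (α ⊕ β))) with hy'
  have hz1 : ∀ c : α ⊕ β → Γ, ρ₁ (FreeGroup.lift c z) = 1 ∧ ρ₂ (FreeGroup.lift c z) = 1 := by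
    intro c
    have ex : FreeGroup.lift c x = FreeGroup.lift (c ∘ Sum.inl) u := by
      rw [hx, ← MonoidHom.comp_apply]; congr 1; ext i; simp
    have ey : FreeGroup.lift c y = FreeGroup.lift (c ∘ Sum.inr) v := by
      rw [hy, ← MonoidHom.comp_apply]; congr 1; ext i; simp
    have h1 := hid (c ∘ Sum.inl)
    have h2 := hid' (c ∘ Sum.inr)
    rw [← ex] at h1
    rw [← ey] at h2
    constructor
    · rw [hzdef]
      simp only [map_mul, h1, one_mul]
      rw [← map_mul, ← map_mul, ← map_mul, ← map_mul]
      have : ρ₁ (FreeGroup.lift c (y * x⁻¹ * y⁻¹)) =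
        ρ₁ (FreeGroup.lift c y) * ρ₁ (FreeGroup.lift c x) * ρ₁ (FreeGroup.lift c (x⁻¹ * y⁻¹)) := by
          rw [h1, mul_one, ← map_mul, ← map_mul]; group
      rw [this, ← map_mul, ← map_mul, ← map_mul, ← map_mul]; group; simp
    · rw [hzdef]
      have : ρ₂ (FreeGroup.lift c (x * y * x⁻¹ * y⁻¹)) =
        ρ₂ (FreeGroup.lift c x) * ρ₂ (FreeGroup.lift c y) * ρ₂ (FreeGroup.lift c (x⁻¹ * y⁻¹)) := by
          rw [← map_mul, ← map_mul, ← map_mul, ← map_mul]; group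
      rw [this, h2, mul_one]
      have : ρ₂ (FreeGroup.lift c x) * ρ₂ (FreeGroup.lift c (x⁻¹ * y⁻¹)) =
        ρ₂ (FreeGroup.lift c x) * ρ₂ (FreeGroup.lift c (x⁻¹ * y⁻¹)) * ρ₂ (FreeGroup.lift c y) := by
          rw [h2, mul_one]
      rw [this, ← map_mul, ← map_mul, ← map_mul, ← map_mul]; group; simp
  refine ⟨_, x' * y' * x'⁻¹ * y'⁻¹, ?_, ?_⟩
  · intro h
    apply hc'
    rw [mul_inv_eq_one, mul_inv_eq_iff_eq_mul] at h
    exact h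
  · intro c
    have ex : FreeGroup.lift c x' = FreeGroup.lift (c ∘ Sum.inl) z := by
      rw [hx', ← MonoidHom.comp_apply]; congr 1; ext i; simp
    have ey : FreeGroup.lift c y' = FreeGroup.lift (c ∘ Sum.inr) z := by
      rw [hy', ← MonoidHom.comp_apply]; congr 1; ext i; simp
    have h1 := hz1 (c ∘ Sum.inl)
    have h2 := hz1 (c ∘ Sum.inr)
    rw [← ex] at h1
    rw [← ey] at h2
    have := hab _ _ h1.1 h1.2 h2.1 h2.2
    have e : ρ (FreeGroup.lift c (x' * y' * x'⁻¹ * y'⁻¹)) =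
      ρ (FreeGroup.lift c x') * ρ (FreeGroup.lift c y') * ρ (FreeGroup.lift c (x'⁻¹ * y'⁻¹)) := by
        rw [← map_mul, ← map_mul, ← map_mul, ← map_mul]; group
    rw [e, this, ← map_mul, ← map_mul, ← map_mul, ← map_mul]; group; simp

theorem IdRep.to_fin {Γ M : Type*} [Group Γ] [Monoid M] (ρ : Γ →* M)
    (hρ : Function.Injective ρ) (h : IdRep ρ) :
    ∃ (m : ℕ) (w : FreeGroup (Fin m)), 1 ≤ m ∧ w ≠ 1 ∧
        ∀ c : Fin m → Γ, FreeGroup.lift c w = 1 := by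
  classical
  obtain ⟨α, w, hw, hid⟩ := h
  let s : Finset α := (w.toWord.map Prod.fst).toFinset
  have hs : ∀ x ∈ w.toWord, x.1 ∈ s := fun x hx => by
    simp only [s, List.mem_toFinset, List.mem_map]; exact ⟨x, hx, rfl⟩
  let e := s.equivFin
  let L : List (Fin s.card × Bool) := w.toWord.attach.map fun x => (e ⟨x.1.1, hs x.1 x.2⟩, x.1.2)
  have hL : FreeGroup.map (fun i => ((e.symm i : s) : α)) (FreeGroup.mk L) = w := by
    rw [FreeGroup.map.mk]
    conv_rhs => rw [← FreeGroup.mk_toWord (x := w)]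
    congr 1
    simp [L, List.map_map, Function.comp_def]
    exact List.attach_map_subtype_val _
  have hne : FreeGroup.mk L ≠ 1 := by
    intro h; rw [h, map_one] at hL; exact hw hL.symm
  refine ⟨s.card, FreeGroup.mk L, ?_, hne, fun c => ?_⟩
  · by_contra hlt
    have : s.card = 0 := by omega
    apply hne
    have : IsEmpty (Fin s.card) := by rw [this]; infer_instance
    exact Subsingleton.elim _ _
  · let c' : α → Γ := fun a => if h : a ∈ s then c (e ⟨a, h⟩) else 1
    have h1 := hid c'
    have h2 : (FreeGroup.lift c').comp (FreeGroup.map (fun i => ((e.symm i : s) : α))) =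
        FreeGroup.lift c := by
      ext i; simp [c']
    have h3 : FreeGroup.lift c' (FreeGroup.map (fun i => ((e.symm i : s) : α)) (FreeGroup.mk L)) =
        FreeGroup.lift c (FreeGroup.mk L) := by
      rw [← h2]; rfl
    rw [← hL, h3] at h1
    exact hρ (h1.trans (map_one ρ).symm)

/-- the shift automorphism action of `ℤ` on the free group on `ℤ`. -/
noncomputable def shiftHom : Multiplicative ℤ →* MulAut (FreeGroup ℤ) where
  toFun n := FreeGroup.freeGroupCongr (Equiv.addLeft n.toAdd)
  map_one' := by
    ext x
    simp only [FreeGroup.freeGroupCongr_apply]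
    have : (⇑(Equiv.addLeft (Multiplicative.toAdd (1 : Multiplicative ℤ)))) = id := by
      ext; simp
    rw [this]; simp
  map_mul' a b := by
    ext x
    simp only [FreeGroup.freeGroupCongr_apply, MulAut.mul_apply, FreeGroup.map.comp]
    congr 2
    ext i; simp

theorem shiftHom_of (n : Multiplicative ℤ) (i : ℤ) :
    shiftHom n (FreeGroup.of i) = FreeGroup.of (n.toAdd + i) := by
  simp [shiftHom]

theorem not_identity_of_free {G : Type*} [Group G] (f : FreeGroup (Fin 2) →* G)
    (hf : Function.Injective f) (m : ℕ) (w : FreeGroup (Fin m)) (hw : w ≠ 1)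
    (hid : ∀ c : Fin m → G, FreeGroup.lift c w = 1) : False := by
  let a : FreeGroup (Fin 2) := FreeGroup.of 0
  let b : FreeGroup (Fin 2) := FreeGroup.of 1
  let d : Fin m → FreeGroup (Fin 2) := fun i => a ^ (i : ℤ) * b * (a ^ (i : ℤ))⁻¹
  have h1 : FreeGroup.lift d w = 1 := by
    apply hf
    rw [map_one, ← hid (fun i => f (d i)), ← MonoidHom.comp_apply]
    congr 1; ext i; simp
  let q : FreeGroup (Fin 2) →* (FreeGroup ℤ ⋊[shiftHom] Multiplicative ℤ) :=
    FreeGroup.lift ![SemidirectProduct.inr (Multiplicative.ofAdd 1),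
      SemidirectProduct.inl (FreeGroup.of 0)]
  have h2 : q.comp (FreeGroup.lift d) =
      (SemidirectProduct.inl).comp (FreeGroup.map (fun i : Fin m => (i : ℤ))) := by
    ext i : 1
    have ha : q a = SemidirectProduct.inr (Multiplicative.ofAdd 1) := by simp [q, a]
    have hb : q b = SemidirectProduct.inl (FreeGroup.of 0) := by simp [q, b]
    simp only [MonoidHom.comp_apply, FreeGroup.lift_apply_of, FreeGroup.map.of, d, map_mul, map_inv,
      map_zpow, ha, hb]
    rw [← map_zpow, ← map_inv, ← SemidirectProduct.inl_aut, shiftHom_of]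
    simp
  have h3 := DFunLike.congr_fun h2 w
  rw [MonoidHom.comp_apply, h1, map_one, MonoidHom.comp_apply] at h3
  have h4 := SemidirectProduct.inl_injective (h3.symm.trans (map_one _).symm)
  have inj : Function.Injective (fun i : Fin m => (i : ℤ)) := by
    intro i j h; simpa [Fin.ext_iff] using h
  exact hw (FreeGroup.map_injective inj (h4.trans (map_one _).symm))

/-- A ping-pong lemma. -/
theorem pingpong {Γ X : Type*} [Group Γ] [MulAction Γ X] {ι : Type*} (a : ι → Γ)
    (U D : ι × Bool → Set X)
    (hDU : ∀ s : ι × Bool, ∀ x ∈ D s, (bif s.2 then a s.1 else (a s.1)⁻¹) • x ∈ U s)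
    (hUD : ∀ s t : ι × Bool, (s.1 = t.1 → s.2 = t.2) → U t ⊆ D s)
    (p : X) (hpD : ∀ s, p ∈ D s) (hpU : ∀ s, p ∉ U s) :
    Function.Injective (FreeGroup.lift a) := by
  classical
  rw [injective_iff_map_eq_one]
  intro w hw
  by_contra hne
  have hw' : w.toWord ≠ [] := fun h => hne (FreeGroup.toWord_eq_nil_iff.1 h)
  have key : ∀ (L : List (ι × Bool)) (s : ι × Bool), FreeGroup.IsReduced (s :: L) →
      (FreeGroup.lift a (FreeGroup.mk (s :: L))) • p ∈ U s := by
    intro L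
    induction L with
    | nil =>
      intro s _
      have := hDU s p (hpD s)
      simpa using this
    | cons t L ih =>
      intro s hs
      have hs' := List.isChain_cons_cons.1 hs
      have h1 := ih t hs'.2
      have h2 := hDU s _ (hUD s t hs'.1 h1)
      rw [← List.singleton_append, ← FreeGroup.mul_mk, map_mul, mul_smul]
      simpa using h2
  obtain ⟨s, L, hsL⟩ := List.exists_cons_of_ne_nil hw'
  have hr := FreeGroup.isReduced_toWord (x := w)
  rw [hsL] at hr
  have h1 := key L s hr
  rw [← hsL, FreeGroup.mk_toWord, hw, one_smul] at h1
  exact hpU s h1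

end TitsAlt

namespace TitsAlt
open Pointwise Matrix

/-- Strong irreducibility, in terms of matrix coefficients. -/
def SI {Γ ι L : Type*} [Group Γ] [Fintype ι] [DecidableEq ι] [Field L]
    (ρ : Γ →* Matrix ι ι L) : Prop :=
  ∀ H : Subgroup Γ, H.FiniteIndex → ∀ x y : ι → L, x ≠ 0 → y ≠ 0 →
    ∃ h ∈ H, x ⬝ᵥ (ρ h *ᵥ y) ≠ 0

theorem gp_abstract {Γ L : Type*} [Group Γ] [Field L] (A : Subalgebra L (Γ → L)) (hA : A.FG)
    (hst : ∀ f ∈ A, ∀ g : Γ, (fun h => f (h * g)) ∈ A) (Q : Finset (Γ → L)) (hQ : ∀ f ∈ Q, f ∈ A)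
    (hne : ∀ f ∈ Q, ∀ H : Subgroup Γ, H.FiniteIndex → ∃ h ∈ H, f h ≠ 0) :
    ∃ h, ∀ f ∈ Q, f h ≠ 0 := by
  classical
  by_contra hcon
  push Not at hcon
  let act : MulSemiringAction Γ A :=
    { smul := fun g f => ⟨fun h => f.1 (h * g), hst f.1 f.2 g⟩
      one_smul := fun f => Subtype.ext (funext fun h => congrArg f.1 (mul_one h))
      mul_smul := fun a b f => Subtype.ext (funext fun h => congrArg f.1 (mul_assoc h a b).symm)
      smul_zero := fun a => rfl
      smul_add := fun a f g => rfl
      smul_one := fun a => rfl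
      smul_mul := fun a f g => rfl }
  have hsm : ∀ (g : Γ) (f : A) (h : Γ), (g • f).1 h = f.1 (h * g) := fun g f h => rfl
  have : Algebra.FiniteType L A := A.fg_iff_finiteType.1 hA
  have : IsNoetherianRing A := Algebra.FiniteType.isNoetherianRing L A
  have hfin : (minimalPrimes A).Finite := minimalPrimes.finite_of_isNoetherianRing A
  let ev : A →+* L := (Pi.evalRingHom (fun _ => L) (1 : Γ)).comp A.val.toRingHom
  have hk : (RingHom.ker ev).IsPrime := RingHom.ker_isPrime ev
  obtain ⟨p, hp, hple⟩ := Ideal.exists_minimalPrimes_le (bot_le : (⊥ : Ideal A) ≤ RingHom.ker ev)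
  have hpp : p.IsPrime := hp.1.1
  have hprod : ∏ f : Q, (⟨f.1, hQ f.1 f.2⟩ : A) = 0 := by
    apply Subtype.ext
    funext h
    obtain ⟨f, hf, h0⟩ := hcon h
    have : (A.val (∏ f : Q, (⟨f.1, hQ f.1 f.2⟩ : A))) h = 0 := by
      rw [map_prod, Finset.prod_apply]
      exact Finset.prod_eq_zero (i := (⟨f, hf⟩ : Q)) (Finset.mem_univ _) h0
    exact this
  have hmem : ∏ f : Q, (⟨f.1, hQ f.1 f.2⟩ : A) ∈ p := by rw [hprod]; exact p.zero_mem
  obtain ⟨f, -, hf⟩ := (hpp.prod_mem_iff).1 hmem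
  have hsub : ∀ g : Γ, g • p ∈ minimalPrimes A := by
    intro g
    refine ⟨⟨(Ideal.IsPrime.smul_iff g).2 hpp, bot_le⟩, fun q hq hle => ?_⟩
    have h1 : g⁻¹ • q ≤ p := Ideal.subset_pointwise_smul_iff.1 hle
    have h2 := hp.2 ⟨(Ideal.IsPrime.smul_iff g⁻¹).2 hq.1, bot_le⟩ h1
    exact Ideal.pointwise_smul_subset_iff.2 h2
  have hfi : (MulAction.stabilizer Γ p).FiniteIndex := by
    have : Finite (MulAction.orbit Γ p) := by
      refine Set.Finite.subset hfin ?_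
      rintro _ ⟨g, rfl⟩; exact hsub g
    have : Finite (Γ ⧸ MulAction.stabilizer Γ p) :=
      Finite.of_equiv _ (MulAction.orbitEquivQuotientStabilizer Γ p)
    exact Subgroup.finiteIndex_of_finite_quotient
  obtain ⟨h, hh, h0⟩ := hne f.1 f.2 _ hfi
  apply h0
  have h1 : h • (⟨f.1, hQ f.1 f.2⟩ : A) ∈ h • p := Ideal.smul_mem_pointwise_smul h _ p hf
  have hh2 : h • p = p := hh
  rw [hh2] at h1
  have h2 : ev (h • (⟨f.1, hQ f.1 f.2⟩ : A)) = 0 := hple h1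
  have h3 : ev (h • (⟨f.1, hQ f.1 f.2⟩ : A)) = f.1 (1 * h) := rfl
  rw [h3, one_mul] at h2
  exact h2

theorem gp {Γ ι L : Type*} [Group Γ] [Fintype ι] [DecidableEq ι] [Field L]
    (ρ : Γ →* Matrix ι ι L) (hSI : SI ρ) (P : List (Matrix ι ι L × Matrix ι ι L × Bool))
    (hP : ∀ q ∈ P, q.1 ≠ 0 ∧ q.2.1 ≠ 0) :
    ∃ h : Γ, ∀ q ∈ P, q.1 * ρ (bif q.2.2 then h else h⁻¹) * q.2.1 ≠ 0 := by
  classical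
  let G : Set (Γ → L) := Set.range (fun q : ι × ι × Bool =>
    fun h => ρ (bif q.2.2 then h else h⁻¹) q.1 q.2.1)
  let A := Algebra.adjoin L G
  have hgen : ∀ i j b, (fun h => ρ (bif b then h else h⁻¹) i j) ∈ A := fun i j b =>
    Algebra.subset_adjoin ⟨(i, j, b), rfl⟩
  have hA : A.FG := ⟨(Set.toFinite G).toFinset, by simp [A]⟩
  have hst : ∀ f ∈ A, ∀ g : Γ, (fun h => f (h * g)) ∈ A := by
    intro f hf g
    induction hf using Algebra.adjoin_induction with
    | mem x hx =>
      obtain ⟨⟨i, j, b⟩, rfl⟩ := hx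
      cases b
      · have : (fun h => ρ (bif false then h * g else (h * g)⁻¹) i j) =
          ∑ k, (ρ g⁻¹ i k) • (fun h => ρ (bif false then h else h⁻¹) k j) := by
          funext h
          simp [_root_.mul_inv_rev, map_mul, Matrix.mul_apply]
        rw [this]
        exact Subalgebra.sum_mem _ fun k _ => Subalgebra.smul_mem _ (hgen _ _ _) _
      · have : (fun h => ρ (bif true then h * g else (h * g)⁻¹) i j) =
          ∑ k, (ρ g k j) • (fun h => ρ (bif true then h else h⁻¹) i k) := by
          funext h
          simp [map_mul, Matrix.mul_apply, mul_comm]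
        rw [this]
        exact Subalgebra.sum_mem _ fun k _ => Subalgebra.smul_mem _ (hgen _ _ _) _
    | algebraMap r => exact Subalgebra.algebraMap_mem A r
    | add x y _ _ hx hy => exact Subalgebra.add_mem _ hx hy
    | mul x y _ _ hx hy => exact Subalgebra.mul_mem _ hx hy
  have hex : ∀ q : Matrix ι ι L × Matrix ι ι L × Bool, ∃ f : Γ → L, q ∈ P → f ∈ A ∧
      (∀ H : Subgroup Γ, H.FiniteIndex → ∃ h ∈ H, f h ≠ 0) ∧
      ∀ h, f h ≠ 0 → q.1 * ρ (bif q.2.2 then h else h⁻¹) * q.2.1 ≠ 0 := by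
    rintro ⟨a, c, b⟩
    by_cases hq : (a, c, b) ∈ P
    swap
    · exact ⟨0, fun h => absurd h hq⟩
    obtain ⟨ha, hc⟩ := hP _ hq
    obtain ⟨i0, hi0⟩ : ∃ i, a i ≠ 0 := by
      by_contra! hh; exact ha (funext hh)
    obtain ⟨j0, hj0⟩ : ∃ j, cᵀ j ≠ 0 := by
      by_contra! hh
      apply hc
      have : cᵀ = 0 := funext hh
      rwa [Matrix.transpose_eq_zero] at this
    refine ⟨fun h => (a * ρ (bif b then h else h⁻¹) * c) i0 j0, fun _ => ⟨?_, ?_, ?_⟩⟩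
    · have : (fun h => (a * ρ (bif b then h else h⁻¹) * c) i0 j0) =
        ∑ k, ∑ l, (a i0 l * c k j0) • (fun h => ρ (bif b then h else h⁻¹) l k) := by
        funext h
        simp only [Matrix.mul_apply, Finset.sum_mul, Finset.sum_apply, Pi.smul_apply, smul_eq_mul]
        refine Finset.sum_congr rfl fun k _ => Finset.sum_congr rfl fun l _ => by ring
      rw [this]
      exact Subalgebra.sum_mem _ fun k _ => Subalgebra.sum_mem _ fun l _ =>
        Subalgebra.smul_mem _ (hgen _ _ _) _
    · intro H hH
      obtain ⟨h, hh, h0⟩ := hSI H hH (a i0) (cᵀ j0) hi0 hj0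
      have key : ∀ X : Matrix ι ι L, (a * X * c) i0 j0 = a i0 ⬝ᵥ (X *ᵥ cᵀ j0) := by
        intro X
        rw [Matrix.mul_assoc]
        rfl
      cases b
      · refine ⟨h⁻¹, H.inv_mem hh, ?_⟩
        simpa [key] using h0
      · refine ⟨h, hh, ?_⟩
        simpa [key] using h0
    · intro h h0 h1
      apply h0
      simp only at h1
      exact congrFun (congrFun h1 i0) j0
  choose f hf using hex
  obtain ⟨h, hh⟩ := gp_abstract A hA hst (P.toFinset.image f) (by
    intro g hg
    simp only [Finset.mem_image, List.mem_toFinset] at hg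
    obtain ⟨q, hq, rfl⟩ := hg
    exact (hf q hq).1) (by
    intro g hg
    simp only [Finset.mem_image, List.mem_toFinset] at hg
    obtain ⟨q, hq, rfl⟩ := hg
    exact (hf q hq).2.1)
  refine ⟨h, fun q hq => (hf q hq).2.2 h (hh _ ?_)⟩
  simp only [Finset.mem_image, List.mem_toFinset]
  exact ⟨q, hq, rfl⟩

end TitsAlt

namespace TitsAlt
open Matrix Filter Topology

section mat
variable {ι L : Type*} [Fintype ι] [DecidableEq ι] [NormedField L]

theorem mulVec_bound (A : Matrix ι ι L) (ε : ℝ) (hε : 0 ≤ ε) (h : ∀ i j, ‖A i j‖ ≤ ε)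
    (v : ι → L) : ‖A *ᵥ v‖ ≤ (Fintype.card ι * ε) * ‖v‖ := by
  refine (pi_norm_le_iff_of_nonneg (by positivity)).2 fun i => ?_
  calc ‖(A *ᵥ v) i‖ = ‖∑ j, A i j * v j‖ := rfl
    _ ≤ ∑ j, ‖A i j * v j‖ := norm_sum_le _ _
    _ ≤ ∑ j : ι, ε * ‖v‖ := Finset.sum_le_sum fun j _ => by
        rw [norm_mul]
        exact mul_le_mul (h i j) (norm_le_pi_norm v j) (norm_nonneg _) hε
    _ = _ := by simp [mul_assoc]

theorem exists_bound (A : Matrix ι ι L) : ∃ a : ℝ, 1 ≤ a ∧ ∀ v : ι → L, ‖A *ᵥ v‖ ≤ a * ‖v‖ := by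
  let ε := ∑ i, ∑ j, ‖A i j‖
  have h0 : 0 ≤ ε := by positivity
  have : ∀ i j, ‖A i j‖ ≤ ε := fun i j =>
    (Finset.single_le_sum (f := fun j => ‖A i j‖) (fun _ _ => norm_nonneg _)
      (Finset.mem_univ j)).trans
    (Finset.single_le_sum (f := fun i => ∑ j, ‖A i j‖)
      (fun _ _ => Finset.sum_nonneg fun _ _ => norm_nonneg _) (Finset.mem_univ i))
  refine ⟨max 1 (Fintype.card ι * ε), le_max_left _ _, fun v => (mulVec_bound A ε h0 this v).trans ?_⟩
  exact mul_le_mul_of_nonneg_right (le_max_right _ _) (norm_nonneg _)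

theorem eventually_close (A : ℕ → Matrix ι ι L) (Z : Matrix ι ι L)
    (h : Tendsto A atTop (𝓝 Z)) (η : ℝ) (hη : 0 < η) :
    ∀ᶠ k in atTop, ∀ v : ι → L, ‖A k *ᵥ v - Z *ᵥ v‖ ≤ η * ‖v‖ := by
  have h1 : ∀ i j, Tendsto (fun k => A k i j) atTop (𝓝 (Z i j)) := fun i j =>
    ((continuous_id.matrix_elem i j).tendsto Z).comp h
  let ε := η / (Fintype.card ι + 1)
  have hε : 0 < ε := by positivity
  have h2 : ∀ᶠ k in atTop, ∀ i j, ‖(A k - Z) i j‖ ≤ ε := by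
    rw [eventually_all]; intro i
    rw [eventually_all]; intro j
    have := (Metric.tendsto_nhds.1 (h1 i j)) ε hε
    filter_upwards [this] with k hk
    rw [dist_eq_norm] at hk
    exact hk.le
  filter_upwards [h2] with k hk v
  rw [← Matrix.sub_mulVec]
  refine (mulVec_bound _ ε hε.le hk v).trans (mul_le_mul_of_nonneg_right ?_ (norm_nonneg _))
  simp only [ε]
  rw [mul_div_assoc', div_le_iff₀ (by positivity)]
  nlinarith

theorem normalise [ProperSpace L] (A : ℕ → Matrix ι ι L) (hA : ∀ k, A k ≠ 0) :
    ∃ (c : ℕ → L) (φ : ℕ → ℕ) (M : Matrix ι ι L), (∀ k, c k ≠ 0) ∧ StrictMono φ ∧ M ≠ 0 ∧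
      (∀ k, ∃ i j, c k = (A k i j)⁻¹ ∧ ∀ i' j', ‖A k i' j'‖ ≤ ‖A k i j‖) ∧
      Tendsto (fun k => c (φ k) • A (φ k)) atTop (𝓝 M) := by
  classical
  have hmax : ∀ k, ∃ q : ι × ι, A k q.1 q.2 ≠ 0 ∧ ∀ i' j', ‖A k i' j'‖ ≤ ‖A k q.1 q.2‖ := by
    intro k
    obtain ⟨i0, j0, h0⟩ : ∃ i j, A k i j ≠ 0 := by
      by_contra! hh; exact hA k (by ext i j; exact hh i j)
    have : Nonempty (ι × ι) := ⟨(i0, j0)⟩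
    obtain ⟨q, hq⟩ := Finite.exists_max (fun q : ι × ι => ‖A k q.1 q.2‖)
    refine ⟨q, fun h => ?_, fun i j => hq (i, j)⟩
    have := hq (i0, j0)
    rw [h, norm_zero] at this
    exact h0 (norm_le_zero_iff.1 this)
  choose q hq0 hq using hmax
  let c : ℕ → L := fun k => (A k (q k).1 (q k).2)⁻¹
  have hc : ∀ k, c k ≠ 0 := fun k => inv_ne_zero (hq0 k)
  have hbd : ∀ k i j, ‖(c k • A k) i j‖ ≤ 1 := by
    intro k i j
    rw [Matrix.smul_apply, smul_eq_mul, norm_mul, norm_inv, inv_mul_le_iff₀ (norm_pos_iff.2 (hq0 k)),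
      mul_one]
    exact hq k i j
  have hone : ∀ k, (c k • A k) (q k).1 (q k).2 = 1 := fun k => by
    rw [Matrix.smul_apply, smul_eq_mul, inv_mul_cancel₀ (hq0 k)]
  let K : Set (Matrix ι ι L) := {M | (∀ i j, M i j ∈ Metric.closedBall (0 : L) 1) ∧
    ∃ q : ι × ι, M q.1 q.2 = 1}
  have hK : IsCompact K := by
    have h1 : IsCompact {M : Matrix ι ι L | ∀ i j, M i j ∈ Metric.closedBall (0 : L) 1} := by
      have := isCompact_univ_pi (s := fun _ : ι => Set.pi Set.univ
        (fun _ : ι => Metric.closedBall (0 : L) 1)) fun _ =>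
          isCompact_univ_pi fun _ => isCompact_closedBall _ _
      have e : {M : Matrix ι ι L | ∀ i j, M i j ∈ Metric.closedBall (0 : L) 1} =
        (Set.pi Set.univ (fun _ : ι => Set.pi Set.univ
        (fun _ : ι => Metric.closedBall (0 : L) 1)) : Set (ι → ι → L)) :=
        Set.ext fun M => ⟨fun h i _ j _ => h i j, fun h i j => h i trivial j trivial⟩
      rw [e]; exact this
    have h2 : IsClosed {M : Matrix ι ι L | ∃ q : ι × ι, M q.1 q.2 = 1} := by
      rw [Set.ofPred_exists]
      exact isClosed_iUnion_of_finite fun q =>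
        isClosed_eq (continuous_id.matrix_elem _ _) continuous_const
    exact h1.inter_right h2
  have : FirstCountableTopology (Matrix ι ι L) :=
    inferInstanceAs (FirstCountableTopology (ι → ι → L))
  obtain ⟨M, hM, φ, hφ, ht⟩ := hK.tendsto_subseq (x := fun k => c k • A k) (fun k =>
    ⟨fun i j => by simpa using hbd k i j, q k, hone k⟩)
  refine ⟨c, φ, M, hc, hφ, ?_, fun k => ⟨_, _, rfl, hq k⟩, ht⟩
  rintro rfl
  obtain ⟨q, hq⟩ := hM.2
  simp at hq

theorem exists_left (X Y : Matrix ι ι L) (h : Y.rank ≤ (X * Y).rank) :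
    ∃ B : Matrix ι ι L, B * (X * Y) = Y := by
  let f := X.mulVecLin.domRestrict (LinearMap.range Y.mulVecLin)
  have h1 : LinearMap.range f = LinearMap.range (X * Y).mulVecLin := by
    rw [LinearMap.range_domRestrict, ← LinearMap.range_comp, Matrix.mulVecLin_mul]
  have h2 := f.finrank_range_add_finrank_ker
  rw [h1] at h2
  have h3 : Module.finrank L (LinearMap.ker f) = 0 := by
    simp only [Matrix.rank] at h; omega
  have h4 : LinearMap.ker f = ⊥ := Submodule.finrank_eq_zero.1 h3
  obtain ⟨g, hg⟩ := f.exists_leftInverse_of_injective h4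
  refine ⟨LinearMap.toMatrix' ((LinearMap.range Y.mulVecLin).subtype ∘ₗ g), ?_⟩
  refine Matrix.toLin'.injective (LinearMap.ext fun v => ?_)
  rw [Matrix.toLin'_mul, LinearMap.comp_apply, Matrix.toLin'_toMatrix', LinearMap.comp_apply]
  have h5 := LinearMap.congr_fun hg ⟨Y.mulVecLin v, v, rfl⟩
  have h6 : f ⟨Y.mulVecLin v, v, rfl⟩ = Matrix.toLin' (X * Y) v := by
    simp [f]
  rw [LinearMap.comp_apply, h6] at h5
  rw [h5]; rfl

theorem exists_sep (Z : Matrix ι ι L) (p : ι → L) (hp : p ∉ LinearMap.range Z.mulVecLin) :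
    ∃ Q : Matrix ι ι L, Q * Z = 0 ∧ Q *ᵥ p ≠ 0 := by
  obtain ⟨f, hf, hle⟩ := Submodule.exists_le_ker_of_notMem hp
  have hι : Nonempty ι := by
    by_contra hh
    rw [not_nonempty_iff] at hh
    exact hf (by rw [Subsingleton.elim p 0, map_zero])
  let F : (ι → L) →ₗ[L] (ι → L) := LinearMap.pi fun _ => f
  refine ⟨LinearMap.toMatrix' F, ?_, ?_⟩
  · refine Matrix.toLin'.injective (LinearMap.ext fun v => ?_)
    rw [Matrix.toLin'_mul, LinearMap.comp_apply, Matrix.toLin'_toMatrix']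
    have : f (Matrix.toLin' Z v) = 0 := hle ⟨v, rfl⟩
    ext i; simp only [F, LinearMap.pi_apply, this]; simp
  · intro h
    obtain ⟨i⟩ := hι
    have h2 : Matrix.toLin' (LinearMap.toMatrix' F) p = 0 := h
    rw [Matrix.toLin'_toMatrix'] at h2
    exact hf (congrFun h2 i)

end mat

/-- Rank-minimality yields the dynamics. -/
theorem exists_free_of_limits {Γ ι L : Type*} [Group Γ] [Fintype ι] [DecidableEq ι] [NormedField L]
    [Infinite L] (ρ : Γ →* Matrix ι ι L) (z : Fin 2 → ℕ → Γ) (e : ℕ → L) (he : ∀ k, e k ≠ 0)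
    (Z : Fin 2 × Bool → Matrix ι ι L)
    (hZ : ∀ s, Tendsto (fun k => e k • ρ (bif s.2 then z s.1 k else (z s.1 k)⁻¹)) atTop (𝓝 (Z s)))
    (hZ0 : ∀ s, Z s ≠ 0) (hdet : ∀ s, (Z s).det = 0)
    (hrk : ∀ s t, (s.1 = t.1 → s.2 = t.2) → (Z t).rank ≤ (Z s * Z t).rank) :
    ∃ f : FreeGroup (Fin 2) →* Γ, Function.Injective f := by
  classical
  -- the base point
  obtain ⟨p, hp1, hp2⟩ : ∃ p : ι → L, (∀ s, Z s *ᵥ p ≠ 0) ∧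
      ∀ s, p ∉ LinearMap.range (Z s).mulVecLin := by
    let S : Set (Submodule L (ι → L)) := Set.range (fun s => LinearMap.ker (Z s).mulVecLin) ∪
      Set.range (fun s => LinearMap.range (Z s).mulVecLin)
    have hS : S.Finite := (Set.finite_range _).union (Set.finite_range _)
    have htop : ⊤ ∉ S := by
      rintro (⟨s, hs⟩ | ⟨s, hs⟩)
      · apply hZ0 s
        have : (Z s).mulVecLin = 0 := LinearMap.ker_eq_top.1 hs
        exact Matrix.toLin'.injective (by rw [map_zero]; exact this)
      · have h1 : Function.Surjective (Z s).mulVec := LinearMap.range_eq_top.1 hs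
        have h2 := Matrix.mulVec_surjective_iff_isUnit.1 h1
        rw [Matrix.isUnit_iff_isUnit_det, hdet s] at h2
        exact not_isUnit_zero h2
    have h1 := Subspace.biUnion_ne_univ_of_top_notMem (s := hS.toFinset) (by simpa using htop)
    rw [Set.ne_univ_iff_exists_notMem] at h1
    obtain ⟨p, hp⟩ := h1
    simp only [Set.Finite.mem_toFinset, Set.mem_iUnion, not_exists] at hp
    exact ⟨p, fun s hs => hp _ (Or.inl ⟨s, rfl⟩) hs, fun s hs => hp _ (Or.inr ⟨s, rfl⟩) hs⟩
  have hp0 : 0 < ‖p‖ := by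
    rw [norm_pos_iff]; rintro rfl
    exact hp1 (0, true) (Matrix.mulVec_zero _)
  have hC1 : ∀ᶠ C : ℝ in atTop, ∀ s, ∀ v, ‖Z s *ᵥ v‖ ≤ C * ‖v‖ := by
    rw [eventually_all]; intro s
    obtain ⟨a, -, ha⟩ := exists_bound (Z s)
    filter_upwards [eventually_ge_atTop a] with C hC v
    exact (ha v).trans (mul_le_mul_of_nonneg_right hC (norm_nonneg _))
  have hC2 : ∀ᶠ C : ℝ in atTop, ∀ s t : Fin 2 × Bool, (s.1 = t.1 → s.2 = t.2) →
      ∀ u, ‖Z t *ᵥ u‖ ≤ C * ‖Z s *ᵥ (Z t *ᵥ u)‖ := by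
    rw [eventually_all]; intro s
    rw [eventually_all]; intro t
    by_cases hst : s.1 = t.1 → s.2 = t.2
    swap
    · exact Eventually.of_forall fun C h => absurd h hst
    obtain ⟨B, hB⟩ := exists_left _ _ (hrk s t hst)
    obtain ⟨b, -, hb⟩ := exists_bound B
    filter_upwards [eventually_ge_atTop b] with C hC _ u
    have := hb ((Z s * Z t) *ᵥ u)
    rw [Matrix.mulVec_mulVec, hB] at this
    rw [Matrix.mulVec_mulVec]
    exact this.trans (mul_le_mul_of_nonneg_right hC (norm_nonneg _))
  have hC3 : ∀ᶠ C : ℝ in atTop, ∀ s, ∀ u, ‖p‖ ≤ C * ‖p - Z s *ᵥ u‖ := by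
    rw [eventually_all]; intro s
    obtain ⟨Q, hQ, hQp⟩ := exists_sep (Z s) p (hp2 s)
    obtain ⟨b, hb1, hb⟩ := exists_bound Q
    have hpos := norm_pos_iff.2 hQp
    filter_upwards [eventually_ge_atTop (b * ‖p‖ / ‖Q *ᵥ p‖)] with C hC u
    have h1 := hb (p - Z s *ᵥ u)
    rw [Matrix.mulVec_sub, Matrix.mulVec_mulVec, hQ, Matrix.zero_mulVec, sub_zero] at h1
    rw [div_le_iff₀ hpos] at hC
    have h2 : b * ‖p‖ ≤ C * (b * ‖p - Z s *ᵥ u‖) :=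
      hC.trans (mul_le_mul_of_nonneg_left h1 (by
        by_contra! hneg
        have : C * ‖Q *ᵥ p‖ < 0 := mul_neg_of_neg_of_pos hneg hpos
        nlinarith))
    have hb0 : 0 < b := by linarith
    nlinarith
  have hC4 : ∀ᶠ C : ℝ in atTop, ∀ s, ‖p‖ ≤ C * ‖Z s *ᵥ p‖ := by
    rw [eventually_all]; intro s
    filter_upwards [eventually_ge_atTop (‖p‖ / ‖Z s *ᵥ p‖)] with C hC
    rwa [div_le_iff₀ (norm_pos_iff.2 (hp1 s))] at hC
  obtain ⟨C, h1, h2, h3, h4, hC⟩ :=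
    (hC1.and (hC2.and (hC3.and (hC4.and (eventually_ge_atTop 1))))).exists
  have hCpos : 0 < C := by linarith
  let c := 1 / (2 * C)
  let δ := 1 / (4 * C ^ 2)
  have hc : c * C = 1 / 2 := by simp only [c]; field_simp
  have hδ : δ * C = c / 2 := by simp only [c, δ]; field_simp; norm_num
  have hc0 : 0 < c := by positivity
  have hδ0 : 0 < δ := by positivity
  have hc1 : c ≤ 1 / 2 := by nlinarith
  have hδ1 : δ ≤ 1 / 4 := by nlinarith
  have hk : ∀ᶠ k in atTop, ∀ s : Fin 2 × Bool, ∀ v : ι → L,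
      ‖(e k • ρ (bif s.2 then z s.1 k else (z s.1 k)⁻¹)) *ᵥ v - Z s *ᵥ v‖ ≤ (δ * c / 2) * ‖v‖ := by
    rw [eventually_all]; intro s
    exact eventually_close _ _ (hZ s) _ (by positivity)
  obtain ⟨k, hk⟩ := hk.exists
  let act : MulAction Γ (ι → L) :=
    { smul := fun g v => ρ g *ᵥ v
      one_smul := fun v => by
        change ρ 1 *ᵥ v = v
        rw [map_one, Matrix.one_mulVec]
      mul_smul := fun a b v => by
        change ρ (a * b) *ᵥ v = ρ a *ᵥ (ρ b *ᵥ v)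
        rw [map_mul, Matrix.mulVec_mulVec] }
  have hsm : ∀ (g : Γ) (v : ι → L), g • v = ρ g *ᵥ v := fun g v => rfl
  refine ⟨_, pingpong (X := ι → L) (fun i => z i k)
    (fun s => {v | v ≠ 0 ∧ ∃ u, ‖v - Z s *ᵥ u‖ ≤ δ * ‖v‖})
    (fun s => {v | v ≠ 0 ∧ c * ‖v‖ ≤ ‖Z s *ᵥ v‖}) ?_ ?_ p ?_ ?_⟩
  · rintro s v ⟨hv0, hv⟩
    have hv0' := norm_pos_iff.2 hv0
    have hks := hk s v
    set g := (bif s.2 then z s.1 k else (z s.1 k)⁻¹) with hg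
    rw [hsm]
    have hek := norm_pos_iff.2 (he k)
    rw [Matrix.smul_mulVec] at hks
    have h5 : ‖Z s *ᵥ v‖ ≤ ‖e k • ρ g *ᵥ v‖ + ‖e k • ρ g *ᵥ v - Z s *ᵥ v‖ := by
      exact norm_le_norm_add_norm_sub _ _
    have h6 : ‖e k • ρ g *ᵥ v‖ = ‖e k‖ * ‖ρ g *ᵥ v‖ := norm_smul _ _
    have h7 : c / 2 * ‖v‖ ≤ ‖e k‖ * ‖ρ g *ᵥ v‖ := by
      nlinarith [mul_le_mul_of_nonneg_right hδ1 (mul_pos hc0 hv0').le]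
    refine ⟨?_, (e k)⁻¹ • v, ?_⟩
    · intro h0
      rw [h0, norm_zero, mul_zero] at h7
      nlinarith
    · have h8 : ρ g *ᵥ v - Z s *ᵥ ((e k)⁻¹ • v) = (e k)⁻¹ • (e k • ρ g *ᵥ v - Z s *ᵥ v) := by
        rw [smul_sub, smul_smul, inv_mul_cancel₀ (he k), one_smul, Matrix.mulVec_smul]
      rw [h8, norm_smul, norm_inv, inv_mul_le_iff₀ hek]
      nlinarith
  · rintro s t hst v ⟨hv0, u, hu⟩
    refine ⟨hv0, ?_⟩
    have hv0' := norm_pos_iff.2 hv0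
    have h5 : ‖v‖ ≤ ‖Z t *ᵥ u‖ + ‖v - Z t *ᵥ u‖ := by
      rw [add_comm]; exact norm_le_norm_sub_add v _
    have h6 := h2 s t hst u
    have h7 := h1 s (v - Z t *ᵥ u)
    have h8 : ‖Z s *ᵥ (Z t *ᵥ u)‖ ≤ ‖Z s *ᵥ v‖ + ‖Z s *ᵥ (v - Z t *ᵥ u)‖ := by
      rw [Matrix.mulVec_sub]; exact norm_le_norm_add_norm_sub _ _
    have h9 : ‖Z s *ᵥ (v - Z t *ᵥ u)‖ ≤ c / 2 * ‖v‖ := by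
      rw [← hδ]; nlinarith
    have h10 : 3 / 4 * ‖v‖ ≤ C * ‖Z s *ᵥ (Z t *ᵥ u)‖ := by nlinarith
    have h11 : 3 / 2 * c * ‖v‖ ≤ ‖Z s *ᵥ (Z t *ᵥ u)‖ := by
      have := mul_le_mul_of_nonneg_left h10 hc0.le
      rw [← mul_assoc c C, hc] at this
      linarith
    linarith
  · intro s
    refine ⟨norm_pos_iff.1 hp0, ?_⟩
    have := mul_le_mul_of_nonneg_left (h4 s) hc0.le
    rw [← mul_assoc c C, hc] at this
    have := norm_nonneg (Z s *ᵥ p)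
    linarith
  · rintro s ⟨-, u, hu⟩
    have h5 := h3 s u
    have : C * ‖p - Z s *ᵥ u‖ ≤ c / 2 * ‖p‖ := by rw [← hδ]; nlinarith
    nlinarith

end TitsAlt

namespace TitsAlt
open Matrix Filter Topology

set_option maxHeartbeats 1000000 in
theorem pp {Γ ι L : Type*} [Group Γ] [Fintype ι] [DecidableEq ι] [NormedField L]
    [Infinite L] [ProperSpace L] (ρ : Γ →* Matrix ι ι L) (hSI : SI ρ)
    (hub : ∀ B : ℝ, ∃ g i j, B * ‖(ρ g).det‖ < ‖ρ g i j‖ ^ Fintype.card ι) :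
    ∃ f : FreeGroup (Fin 2) →* Γ, Function.Injective f := by
  classical
  have : FirstCountableTopology (Matrix ι ι L) :=
    inferInstanceAs (FirstCountableTopology (ι → ι → L))
  have : T2Space (Matrix ι ι L) := inferInstanceAs (T2Space (ι → ι → L))
  have hι : Nonempty ι := by
    obtain ⟨g, i, -⟩ := hub 0; exact ⟨i⟩
  have hinv : ∀ g, ρ g * ρ g⁻¹ = 1 := fun g => by rw [← map_mul, mul_inv_cancel, map_one]
  have hinv' : ∀ g, ρ g⁻¹ * ρ g = 1 := fun g => by rw [← map_mul, inv_mul_cancel, map_one]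
  have hne : ∀ g, ρ g ≠ 0 := fun g h => by
    have := hinv g; rw [h, zero_mul] at this; exact zero_ne_one this
  have hl : ∀ g X, ρ g * X = 0 ↔ X = 0 := fun g X => ⟨fun h => by
    have h2 : ρ g⁻¹ * (ρ g * X) = 0 := by rw [h, mul_zero]
    rwa [← mul_assoc, hinv', one_mul] at h2, fun h => by rw [h, mul_zero]⟩
  have hr : ∀ g X, X * ρ g = 0 ↔ X = 0 := fun g X => ⟨fun h => by
    have h2 : (X * ρ g) * ρ g⁻¹ = 0 := by rw [h, zero_mul]
    rwa [mul_assoc, hinv, mul_one] at h2, fun h => by rw [h, zero_mul]⟩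
  let E : Submonoid (Matrix ι ι L) :=
    { carrier := {M | ∃ c : L, c ≠ 0 ∧ ∃ g, M = c • ρ g}
      one_mem' := ⟨1, one_ne_zero, 1, by simp⟩
      mul_mem' := by
        rintro _ _ ⟨c, hc, g, rfl⟩ ⟨d, hd, h, rfl⟩
        exact ⟨c * d, mul_ne_zero hc hd, g * h, by rw [map_mul, smul_mul_smul_comm]⟩ }
  let Ω := E.topologicalClosure
  have hρΩ : ∀ g, ρ g ∈ Ω := fun g => E.le_topologicalClosure ⟨1, one_ne_zero, g, by simp⟩
  -- a nonzero singular limit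
  obtain ⟨M, hMΩ, hM0, hMd⟩ : ∃ M ∈ Ω, M ≠ 0 ∧ M.det = 0 := by
    choose g i j hg using fun k : ℕ => hub k
    obtain ⟨c, φ, M, hc, hφ, hM0, hcA, ht⟩ := normalise (fun k => ρ (g k)) (fun k => hne _)
    refine ⟨M, ?_, hM0, ?_⟩
    · exact mem_closure_of_tendsto ht (Eventually.of_forall fun k => ⟨_, hc _, _, rfl⟩)
    · have h1 : ∀ k : ℕ, k * ‖(c k • ρ (g k)).det‖ ≤ 1 := by
        intro k
        obtain ⟨i', j', hc', hmax⟩ := hcA k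
        have h2 := hg k
        have h3 : ‖ρ (g k) (i k) (j k)‖ ^ Fintype.card ι ≤ ‖ρ (g k) i' j'‖ ^ Fintype.card ι :=
          pow_le_pow_left₀ (norm_nonneg _) (hmax _ _) _
        have h4 : 0 < ‖ρ (g k) i' j'‖ ^ Fintype.card ι := by
          have := norm_nonneg (ρ (g k)).det
          refine lt_of_le_of_lt ?_ (h2.trans_le h3)
          positivity
        rw [Matrix.det_smul, norm_mul, norm_pow, hc', norm_inv, inv_pow, ← div_eq_inv_mul,
          mul_div_assoc', div_le_one h4]
        exact (h2.trans_le h3).le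
      have h2 : Tendsto (fun k => (c (φ k) • ρ (g (φ k))).det) atTop (𝓝 M.det) :=
        ((Continuous.matrix_det continuous_id).tendsto M).comp ht
      refine tendsto_nhds_unique h2 ?_
      refine squeeze_zero_norm' ?_ (tendsto_one_div_atTop_nhds_zero_nat (𝕜 := ℝ))
      filter_upwards [eventually_gt_atTop 0] with k hk
      have hk' : (0 : ℝ) < k := by exact_mod_cast hk
      rw [le_div_iff₀ hk', mul_comm]
      refine le_trans ?_ (h1 (φ k))
      exact mul_le_mul_of_nonneg_right (by exact_mod_cast hφ.le_apply) (norm_nonneg _)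
  have hex : ∃ r, ∃ M ∈ Ω, M ≠ 0 ∧ M.det = 0 ∧ M.rank = r := ⟨_, M, hMΩ, hM0, hMd, rfl⟩
  obtain ⟨π, hπΩ, hπ0, hπd, hπr⟩ := Nat.find_spec hex
  have hmin : ∀ X ∈ Ω, X ≠ 0 → X.det = 0 → π.rank ≤ X.rank := fun X h1 h2 h3 => by
    rw [hπr]; exact Nat.find_min' hex ⟨X, h1, h2, h3, rfl⟩
  obtain ⟨u, huE, hu⟩ := mem_closure_iff_seq_limit.1 hπΩ
  choose c hc g hg using huE
  obtain ⟨d, φ, σ, hd, hφ, hσ0, -, ht⟩ := normalise (fun k => ρ (g k)⁻¹) (fun k => hne _)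
  have hσΩ : σ ∈ Ω := mem_closure_of_tendsto ht (Eventually.of_forall fun k => ⟨_, hd _, _, rfl⟩)
  have ht' : Tendsto (fun k => c (φ k) • ρ (g (φ k))) atTop (𝓝 π) := by
    have := hu.comp hφ.tendsto_atTop
    refine this.congr fun k => ?_
    exact hg _
  obtain ⟨h, hh⟩ := gp ρ hSI [(π, σ, true), (π, σ, false)] (by simp [hπ0, hσ0])
  simp only [List.mem_cons, List.not_mem_nil, or_false, forall_eq_or_imp, forall_eq,
    cond_true, cond_false] at hh
  obtain ⟨hα0, hβ0⟩ := hh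
  let e : ℕ → L := fun k => c (φ k) * d (φ k)
  let y : ℕ → Γ := fun k => g (φ k) * h * (g (φ k))⁻¹
  have hα : Tendsto (fun k => e k • ρ (y k)) atTop (𝓝 (π * ρ h * σ)) := by
    refine ((ht'.mul tendsto_const_nhds).mul ht).congr fun k => ?_
    simp only [e, y, map_mul, smul_mul_assoc, mul_smul_comm, smul_smul, mul_comm]
  have hβ : Tendsto (fun k => e k • ρ (y k)⁻¹) atTop (𝓝 (π * ρ h⁻¹ * σ)) := by
    refine ((ht'.mul tendsto_const_nhds).mul ht).congr fun k => ?_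
    have : (y k)⁻¹ = g (φ k) * h⁻¹ * (g (φ k))⁻¹ := by simp only [y]; group
    simp only [e, this, map_mul, smul_mul_assoc, mul_smul_comm, smul_smul, mul_comm]
  have hαΩ : π * ρ h * σ ∈ Ω := Ω.mul_mem (Ω.mul_mem hπΩ (hρΩ _)) hσΩ
  have hβΩ : π * ρ h⁻¹ * σ ∈ Ω := Ω.mul_mem (Ω.mul_mem hπΩ (hρΩ _)) hσΩ
  have hαd : (π * ρ h * σ).det = 0 := by simp [Matrix.det_mul, hπd]
  have hβd : (π * ρ h⁻¹ * σ).det = 0 := by simp [Matrix.det_mul, hπd]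
  have hαr : (π * ρ h * σ).rank ≤ π.rank := by
    rw [mul_assoc]; exact Matrix.rank_mul_le_left _ _
  have hβr : (π * ρ h⁻¹ * σ).rank ≤ π.rank := by
    rw [mul_assoc]; exact Matrix.rank_mul_le_left _ _
  generalize π * ρ h * σ = α at *
  generalize π * ρ h⁻¹ * σ = β at *
  obtain ⟨k2, hk2⟩ := gp ρ hSI [(α, α, true), (β, β, false)] (by simp [hα0, hβ0])
  obtain ⟨k3, hk3⟩ := gp ρ hSI [(α * ρ k2, α, true), (β, α, true), (β, α, false),
    (β, ρ k2⁻¹ * β, false)] (by simp [hα0, hβ0, hl, hr])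
  obtain ⟨k4, hk4⟩ := gp ρ hSI [(α * ρ k2, β, false), (β, β, false), (α, α, true),
    (α, ρ k2⁻¹ * β, true), (α, ρ k3 * α, true), (β * ρ k3⁻¹, β, false)]
    (by simp [hα0, hβ0, hl, hr])
  simp only [List.mem_cons, List.not_mem_nil, or_false, forall_eq_or_imp, forall_eq,
    cond_true, cond_false, ne_eq, mul_assoc] at hk2 hk3 hk4
  obtain ⟨a1, a2⟩ := hk2
  obtain ⟨b1, b2, b3, b4⟩ := hk3
  obtain ⟨c1, c2, c3, c4, c5, c6⟩ := hk4
  let Z : Fin 2 × Bool → Matrix ι ι L := fun s => match s with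
    | (0, true) => α * ρ k2
    | (0, false) => ρ k2⁻¹ * β
    | (1, true) => ρ k3 * α * ρ k4
    | (1, false) => ρ k4⁻¹ * β * ρ k3⁻¹
  let z : Fin 2 → ℕ → Γ := fun i k => match i with
    | 0 => y k * k2
    | 1 => k3 * y k * k4
  have hZΩ : ∀ s, Z s ∈ Ω := by
    rintro ⟨i, b⟩
    fin_cases i <;> cases b
    · exact Ω.mul_mem (hρΩ _) hβΩ
    · exact Ω.mul_mem hαΩ (hρΩ _)
    · exact Ω.mul_mem (Ω.mul_mem (hρΩ _) hβΩ) (hρΩ _)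
    · exact Ω.mul_mem (Ω.mul_mem (hρΩ _) hαΩ) (hρΩ _)
  have hZd : ∀ s, (Z s).det = 0 := by
    rintro ⟨i, b⟩
    fin_cases i <;> cases b <;> simp [Z, Matrix.det_mul, hαd, hβd]
  have hZr : ∀ s, (Z s).rank ≤ π.rank := by
    rintro ⟨i, b⟩
    fin_cases i <;> cases b
    · exact (Matrix.rank_mul_le_right _ _).trans hβr
    · exact (Matrix.rank_mul_le_left _ _).trans hαr
    · exact ((Matrix.rank_mul_le_left _ _).trans (Matrix.rank_mul_le_right _ _)).trans hβr
    · exact ((Matrix.rank_mul_le_left _ _).trans (Matrix.rank_mul_le_right _ _)).trans hαr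
  have hZZ : ∀ s t, (s.1 = t.1 → s.2 = t.2) → Z s * Z t ≠ 0 := by
    rintro ⟨i, b⟩ ⟨i', b'⟩ hst
    fin_cases i <;> cases b <;> fin_cases i' <;> cases b' <;>
      simp [Z] at hst ⊢ <;> simp only [← mul_assoc, hr] <;>
      simp only [mul_assoc, hl] <;>
      first | exact a1 | exact a2 | exact b1 | exact b2 | exact b3 | exact b4 | exact c1 |
        exact c2 | exact c3 | exact c4 | exact c5 | exact c6
  refine exists_free_of_limits ρ z e (fun k => mul_ne_zero (hc _) (hd _)) Z ?_ ?_ hZd ?_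
  · rintro ⟨i, b⟩
    fin_cases i <;> cases b
    · refine (tendsto_const_nhds.mul hβ).congr fun k => ?_
      simp [z]
    · refine (hα.mul tendsto_const_nhds).congr fun k => ?_
      simp [z]
    · refine ((tendsto_const_nhds.mul hβ).mul tendsto_const_nhds).congr fun k => ?_
      simp [z, mul_assoc]
    · refine ((tendsto_const_nhds.mul hα).mul tendsto_const_nhds).congr fun k => ?_
      simp [z, mul_assoc]
  · intro s h0
    exact hZZ s s (fun _ => rfl) (by rw [h0, zero_mul])
  · intro s t hst
    exact (hZr t).trans (hmin _ (Ω.mul_mem (hZΩ s) (hZΩ t)) (hZZ s t hst)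
      (by rw [Matrix.det_mul, hZd, zero_mul]))

end TitsAlt

namespace TitsAlt
open Matrix

theorem burnside {Γ ι K : Type*} [Group Γ] [Fintype ι] [DecidableEq ι] [Nonempty ι] [Field K]
    [IsAlgClosed K] (ρ : Γ →* Matrix ι ι K)
    (hirr : ∀ W : Submodule K (ι → K), (∀ g, ∀ w ∈ W, ρ g *ᵥ w ∈ W) → W = ⊥ ∨ W = ⊤) :
    Submodule.span K (Set.range ρ) = ⊤ := by
  classical
  let θ : Γ →* Module.End K (ι → K) :=
    (Matrix.toLinAlgEquiv' (R := K) (n := ι) : Matrix ι ι K →* Module.End K (ι → K)).comp ρ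
  have hθ : ∀ g v, θ g v = ρ g *ᵥ v := fun g v => rfl
  let A := Algebra.adjoin K (Set.range θ)
  have hsimple : IsSimpleModule A (ι → K) := by
    have hs : IsSimpleOrder (Submodule A (ι → K)) := { eq_bot_or_eq_top := fun W => ?_ }
    · exact { toIsSimpleOrder := hs }
    have h := hirr (W.restrictScalars K) (fun g w hw => by
      have := W.smul_mem (⟨θ g, Algebra.subset_adjoin ⟨g, rfl⟩⟩ : A) hw
      exact this)
    rcases h with h | h
    · left; exact (Submodule.restrictScalars_eq_bot_iff K A _).1 h
    · right; exact (Submodule.restrictScalars_eq_top_iff K A _).1 h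
  have hA : ∀ f : Module.End K (ι → K), f ∈ A := by
    intro f
    have hsch := (IsSimpleModule.algebraMap_end_bijective_of_isAlgClosed (A := A)
      (V := ι → K) K).2
    let f' : Module.End (Module.End A (ι → K)) (ι → K) :=
      { toFun := f
        map_add' := f.map_add
        map_smul' := by
          intro m v
          obtain ⟨c, rfl⟩ := hsch m
          exact f.map_smul c v }
    obtain ⟨r, hr⟩ := jacobson_density (R := A) (M := ι → K) f' (Finset.univ.image fun i => Pi.basisFun K ι i)
    have : f = r.1 := (Pi.basisFun K ι).ext fun i => hr _ (by simp)
    rw [this]; exact r.2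
  have hspan : Subalgebra.toSubmodule A = Submodule.span K (Set.range θ) := by
    rw [Algebra.adjoin_eq_span]
    congr 1
    have := Submonoid.closure_eq (MonoidHom.mrange θ)
    rw [MonoidHom.coe_mrange] at this
    rw [this, MonoidHom.coe_mrange]
  rw [eq_top_iff]
  intro X _
  have h1 : Matrix.toLinAlgEquiv' X ∈ Submodule.span K (Set.range θ) := by
    rw [← hspan]; exact hA _
  have h2 : Set.range θ = (Matrix.toLinAlgEquiv' (R := K) (n := ι)).toLinearMap '' Set.range ρ := by
    rw [← Set.range_comp]; rfl
  rw [h2, Submodule.span_image] at h1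
  obtain ⟨Y, hY, hYX⟩ := h1
  have : Y = X := (Matrix.toLinAlgEquiv' (R := K) (n := ι)).injective hYX
  exact this ▸ hY

end TitsAlt

namespace TitsAlt
open Matrix

theorem idRep_trivial {Γ M : Type*} [Group Γ] [Monoid M] : IdRep (1 : Γ →* M) :=
  ⟨Unit, FreeGroup.of (), FreeGroup.of_ne_one _, fun _ => rfl⟩

theorem idRep_of_comm {Γ M : Type*} [Group Γ] [Monoid M] (ρ : Γ →* M)
    (h : ∀ a b, ρ a * ρ b = ρ b * ρ a) : IdRep ρ :=
  IdRep.of_two ρ (1 : Γ →* M) (1 : Γ →* M) idRep_trivial idRep_trivial (fun a b _ _ _ _ => h a b)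

theorem idRep_of_finite {Γ ι K : Type*} [Group Γ] [Fintype ι] [DecidableEq ι] [Nonempty ι] [Field K]
    [IsAlgClosed K] (ρ : Γ →* Matrix ι ι K) (hspan : Submodule.span K (Set.range ρ) = ⊤)
    (hfin : (Set.range fun j => (ρ j).trace ^ Fintype.card ι * (ρ j⁻¹).det).Finite) :
    IdRep ρ := by
  classical
  set n := Fintype.card ι with hn
  have hn0 : 0 < n := Fintype.card_pos
  have hdet : ∀ g, (ρ g).det * (ρ g⁻¹).det = 1 := fun g => by
    rw [← Matrix.det_mul, ← map_mul, mul_inv_cancel, map_one, Matrix.det_one]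
  have hdet0 : ∀ g, (ρ g).det ≠ 0 := fun g h => by
    have := hdet g; rw [h, zero_mul] at this; exact zero_ne_one this
  obtain ⟨s, hs⟩ : ∃ s : Finset Γ, Submodule.span K (ρ '' s) = ⊤ := by
    obtain ⟨t, ht⟩ := (Module.Finite.fg_top (R := K) (M := Matrix ι ι K))
    have h1 : (t : Set (Matrix ι ι K)) ⊆ Submodule.span K (Set.range ρ) := by rw [hspan]; simp
    obtain ⟨u, hu, hu2⟩ := Submodule.subset_span_finite_of_subset_span h1
    obtain ⟨s, hs⟩ : ∃ s : Finset Γ, ρ '' s = (u : Set _) := by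
      obtain ⟨s, hs1, hs2⟩ := Finset.subset_set_image_iff.1 (by simpa using hu : (u : Set (Matrix ι ι K)) ⊆ ρ '' Set.univ)
      exact ⟨s, by rw [← hs2]; simp⟩
    refine ⟨s, ?_⟩
    rw [hs, eq_top_iff, ← ht]
    exact Submodule.span_le.2 hu2
  choose δ hδ using fun j => IsAlgClosed.exists_pow_nat_eq (ρ j).det hn0
  have hδ0 : ∀ j, δ j ≠ 0 := fun j h => hdet0 j (by rw [← hδ j, h, zero_pow hn0.ne'])
  let Mm : Γ → Matrix ι ι K := fun j => (δ j)⁻¹ • ρ j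
  let Φ : Matrix ι ι K → (s → K) := fun M i => (ρ i.1 * M).trace
  have hΦ : Function.Injective Φ := by
    intro M N hMN
    have h1 : ∀ X : Matrix ι ι K, (X * M).trace = (X * N).trace := by
      intro X
      have hX : X ∈ Submodule.span K (ρ '' s) := by rw [hs]; trivial
      induction hX using Submodule.span_induction with
      | mem x hx => obtain ⟨g, hg, rfl⟩ := hx; exact congrFun hMN ⟨g, hg⟩
      | zero => simp
      | add x y _ _ hx hy => simp [add_mul, hx, hy]
      | smul a x _ hx => simp [hx]
    exact Matrix.ext_iff_trace_mul_left.2 h1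
  have hF : (Set.range Mm).Finite := by
    let T := Set.range fun j => (ρ j).trace ^ n * (ρ j⁻¹).det
    have h1 : ∀ i : s, {x : K | ∃ t ∈ T, x ^ n = t * (ρ i.1).det}.Finite := by
      intro i
      have : {x : K | ∃ t ∈ T, x ^ n = t * (ρ i.1).det} = ⋃ t ∈ T, {x | x ^ n = t * (ρ i.1).det} := by
        ext x; simp
      rw [this]
      refine hfin.biUnion fun t _ => ?_
      refine Set.Finite.subset (Polynomial.nthRoots n (t * (ρ i.1).det)).toFinset.finite_toSet ?_
      intro x hx
      simpa [Polynomial.mem_nthRoots hn0] using hx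
    refine Set.Finite.of_finite_image (f := Φ) ?_ hΦ.injOn
    refine Set.Finite.subset (Set.Finite.pi' h1) ?_
    rintro _ ⟨_, ⟨j, rfl⟩, rfl⟩ i
    refine ⟨_, ⟨i.1 * j, rfl⟩, ?_⟩
    simp only [Φ, Mm, Matrix.mul_smul, Matrix.trace_smul, smul_eq_mul, mul_pow, inv_pow, hδ]
    have e1 := hdet i.1
    have e2 := hdet j
    have e3 := hdet0 j
    rw [_root_.mul_inv_rev, map_mul, map_mul, Matrix.det_mul, inv_eq_of_mul_eq_one_right e2]
    linear_combination -(ρ i.1 * ρ j).trace ^ n * (ρ j⁻¹).det * e1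
  let S : Subgroup Γ :=
    { carrier := {g | ∀ h : Γ, ρ g * ρ h = ρ h * ρ g}
      one_mem' := fun h => by simp
      mul_mem' := fun {a b} ha hb h => by
        rw [map_mul, mul_assoc, hb h, ← mul_assoc, ha h, mul_assoc]
      inv_mem' := fun {a} ha h => by
        have := ha (a⁻¹ * h * a⁻¹)
        rw [← map_mul, ← map_mul] at this
        rw [← map_mul, ← map_mul]
        convert this.symm using 2 <;> group }
  have hS : S.FiniteIndex := by
    have hf : Finite (Set.range Mm) := hF
    have : Finite (Γ ⧸ S) := by
      refine Finite.of_injective (fun q : Γ ⧸ S => (⟨Mm q.out, q.out, rfl⟩ : Set.range Mm)) ?_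
      intro q q' h
      have h1 : Mm q.out = Mm q'.out := congrArg Subtype.val h
      rw [← q.out_eq, ← q'.out_eq]
      refine QuotientGroup.eq.2 ?_
      have h2 : ρ q'.out = (δ q'.out * (δ q.out)⁻¹) • ρ q.out := by
        have := congrArg (fun X => δ q'.out • X) h1
        simp only [Mm, smul_smul, mul_inv_cancel₀ (hδ0 _), one_smul] at this
        exact this.symm
      have h3 : ρ (q.out⁻¹ * q'.out) = (δ q'.out * (δ q.out)⁻¹) • 1 := by
        rw [map_mul, h2, Matrix.mul_smul, ← map_mul, inv_mul_cancel, map_one]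
      intro g
      rw [h3]; simp
    exact Subgroup.finiteIndex_of_finite_quotient
  exact IdRep.of_finiteIndex ρ S (idRep_of_comm _ fun a b => a.2 b.1)

end TitsAlt

namespace TitsAlt
open Matrix

theorem exists_eig {ι C : Type*} [Fintype ι] [DecidableEq ι] [Nonempty ι] [NormedField C]
    [IsAlgClosed C] (A : Matrix ι ι C)
    (h : (Fintype.card ι : ℝ) ^ Fintype.card ι * ‖A.det‖ < ‖A.trace‖ ^ Fintype.card ι ∨
      (IsUltrametricDist C ∧ ‖A.det‖ < ‖A.trace‖ ^ Fintype.card ι)) :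
    ∃ (l : C) (v : ι → C), v ≠ 0 ∧ A *ᵥ v = l • v ∧ ‖A.det‖ < ‖l‖ ^ Fintype.card ι := by
  classical
  have hn0 : 0 < Fintype.card ι := Fintype.card_pos
  have htr := Matrix.trace_eq_sum_roots_charpoly A
  have hcard : A.charpoly.roots.card = Fintype.card ι := by
    rw [IsAlgClosed.card_roots_eq_natDegree, Matrix.charpoly_natDegree_eq_dim]
  have hne : A.charpoly.roots.toFinset.Nonempty := by
    rw [Multiset.toFinset_nonempty]; intro h0; rw [h0] at hcard; simp at hcard; omega
  obtain ⟨l, hl, hmax⟩ := Finset.exists_max_image _ (fun x => ‖x‖) hne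
  rw [Multiset.mem_toFinset] at hl
  have hroot := Polynomial.isRoot_of_mem_roots hl
  have hdet0 : (Matrix.scalar ι l - A).det = 0 := by
    rw [← Matrix.eval_charpoly]; exact hroot
  obtain ⟨v, hv0, hv⟩ := Matrix.exists_mulVec_eq_zero_iff.2 hdet0
  refine ⟨l, v, hv0, ?_, ?_⟩
  · rw [Matrix.sub_mulVec, sub_eq_zero] at hv
    rw [← hv]; ext i; simp [Matrix.scalar_apply, Matrix.mulVec_diagonal]
  · have hl0 := norm_nonneg l
    rcases h with h | ⟨hu, h⟩
    · have hs : ∀ s : Multiset C, (∀ x ∈ s, ‖x‖ ≤ ‖l‖) → ‖s.sum‖ ≤ s.card * ‖l‖ := by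
        intro s
        induction s using Multiset.induction_on with
        | empty => simp
        | cons a s ih =>
          intro hx
          have h1 := ih fun x hxs => hx x (Multiset.mem_cons_of_mem hxs)
          have h2 := hx a (Multiset.mem_cons_self a s)
          rw [Multiset.sum_cons, Multiset.card_cons]
          push_cast
          linarith [norm_add_le a s.sum]
      have h1 := hs A.charpoly.roots (fun x hx => hmax x (Multiset.mem_toFinset.2 hx))
      rw [← htr, hcard] at h1
      have h2 := pow_le_pow_left₀ (norm_nonneg _) h1 (Fintype.card ι)
      rw [mul_pow] at h2
      exact lt_of_mul_lt_mul_left (h.trans_le h2) (by positivity)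
    · have hs : ∀ s : Multiset C, (∀ x ∈ s, ‖x‖ ≤ ‖l‖) → ‖s.sum‖ ≤ ‖l‖ := by
        intro s
        induction s using Multiset.induction_on with
        | empty => simp
        | cons a s ih =>
          intro hx
          have h1 := ih fun x hxs => hx x (Multiset.mem_cons_of_mem hxs)
          have h2 := hx a (Multiset.mem_cons_self a s)
          rw [Multiset.sum_cons]
          exact (IsUltrametricDist.norm_add_le_max a s.sum).trans (max_le h2 h1)
      have h1 := hs A.charpoly.roots (fun x hx => hmax x (Multiset.mem_toFinset.2 hx))
      rw [← htr] at h1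
      exact h.trans_le (pow_le_pow_left₀ (norm_nonneg _) h1 (Fintype.card ι))

theorem eig_unbounded {Γ ι C : Type*} [Group Γ] [Fintype ι] [DecidableEq ι] [Nonempty ι]
    [NormedField C] (ρ : Γ →* Matrix ι ι C) (j : Γ) (l : C) (v : ι → C) (hv : v ≠ 0)
    (hl : ρ j *ᵥ v = l • v) (hlt : ‖(ρ j).det‖ < ‖l‖ ^ Fintype.card ι) (B : ℝ) :
    ∃ g i j, B * ‖(ρ g).det‖ < ‖ρ g i j‖ ^ Fintype.card ι := by
  by_contra! hcon
  set n := Fintype.card ι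
  have hd0 : 0 < ‖(ρ j).det‖ := by
    rw [norm_pos_iff]; intro h
    have : (ρ j).det * (ρ j⁻¹).det = 1 := by
      rw [← Matrix.det_mul, ← map_mul, mul_inv_cancel, map_one, Matrix.det_one]
    rw [h, zero_mul] at this; exact zero_ne_one this
  have hq : 1 < ‖l‖ ^ n / ‖(ρ j).det‖ := by rwa [one_lt_div hd0]
  obtain ⟨k, hk⟩ := pow_unbounded_of_one_lt ((n : ℝ) ^ n * B) hq
  have hpow : ρ (j ^ k) *ᵥ v = l ^ k • v := by
    clear hk
    induction k with
    | zero => simp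
    | succ k ih =>
      rw [pow_succ, map_mul, ← Matrix.mulVec_mulVec, hl, Matrix.mulVec_smul, ih, smul_smul,
        pow_succ, mul_comm]
  obtain ⟨q, hq⟩ := Finite.exists_max (fun q : ι × ι => ‖ρ (j ^ k) q.1 q.2‖)
  have h1 := mulVec_bound (ρ (j ^ k)) _ (norm_nonneg _) (fun i j => hq (i, j)) v
  rw [hpow, norm_smul] at h1
  have h2 := le_of_mul_le_mul_right h1 (norm_pos_iff.2 hv)
  have h3 := pow_le_pow_left₀ (norm_nonneg _) h2 n
  rw [mul_pow] at h3
  have h4 := hcon (j ^ k) q.1 q.2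
  have h5 : ‖(ρ (j ^ k)).det‖ = ‖(ρ j).det‖ ^ k := by rw [map_pow, Matrix.det_pow, norm_pow]
  rw [div_pow, lt_div_iff₀ (pow_pos hd0 _)] at hk
  rw [h5] at h4
  have h6 := mul_le_mul_of_nonneg_left h4 (by positivity : (0 : ℝ) ≤ (n : ℝ) ^ n)
  rw [norm_pow, ← pow_mul, mul_comm k n, pow_mul] at h3
  linarith

theorem free_of_place {Γ ι K C : Type*} [Group Γ] [Fintype ι] [DecidableEq ι] [Nonempty ι]
    [Field K] [NormedField C] [IsAlgClosed C] (ρ : Γ →* Matrix ι ι K)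
    (hspan : ∀ H : Subgroup Γ, H.FiniteIndex → Submodule.span K (ρ '' (H : Set Γ)) = ⊤)
    (φ : K →+* C) (L : Subfield C) [ProperSpace L] (hL : ∀ g i j, φ (ρ g i j) ∈ L) (j : Γ)
    (h : (Fintype.card ι : ℝ) ^ Fintype.card ι <
        ‖φ ((ρ j).trace ^ Fintype.card ι * (ρ j⁻¹).det)‖ ∨
      (IsUltrametricDist C ∧ 1 < ‖φ ((ρ j).trace ^ Fintype.card ι * (ρ j⁻¹).det)‖)) :
    ∃ f : FreeGroup (Fin 2) →* Γ, Function.Injective f := by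
  classical
  set n := Fintype.card ι with hn
  have hn0 : 0 < n := Fintype.card_pos
  let ρL : Γ →* Matrix ι ι L :=
    { toFun := fun g => Matrix.of fun i j => ⟨φ (ρ g i j), hL g i j⟩
      map_one' := by
        ext i j
        simp only [Matrix.of_apply, map_one, Matrix.one_apply]
        split_ifs <;> simp
      map_mul' := fun a b => by
        ext i j
        simp [Matrix.mul_apply, map_mul] }
  have hρL : ∀ g i j, ((ρL g i j : L) : C) = φ (ρ g i j) := fun g i j => rfl
  let ρC : Γ →* Matrix ι ι C := (L.subtype.mapMatrix : Matrix ι ι L →+* Matrix ι ι C).toMonoidHom.comp ρL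
  have hρC : ∀ g, ρC g = φ.mapMatrix (ρ g) := fun g => rfl
  have hρCL : ∀ g i j, ρC g i j = (ρL g i j : C) := fun g i j => rfl
  have hSI : SI ρL := by
    intro H hH x y hx hy
    by_contra! hcon
    have key : ∀ M : Matrix ι ι K, ∑ a, ∑ b, (x a : C) * φ (M a b) * (y b : C) = 0 := by
      intro M
      have hM : M ∈ Submodule.span K (ρ '' (H : Set Γ)) := by rw [hspan H hH]; trivial
      induction hM using Submodule.span_induction with
      | mem X hX =>
        obtain ⟨g, hg, rfl⟩ := hX
        have h1 := congrArg (Subtype.val : L → C) (hcon g hg)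
        simp only [dotProduct, Matrix.mulVec, Finset.mul_sum] at h1
        push_cast at h1
        rw [← h1]
        refine Finset.sum_congr rfl fun a _ => Finset.sum_congr rfl fun b _ => ?_
        rw [hρL, mul_assoc]
      | zero => simp
      | add X Y _ _ hX hY =>
        simp only [Matrix.add_apply, map_add, mul_add, add_mul, Finset.sum_add_distrib, hX, hY,
          add_zero]
      | smul c X _ hX =>
        have : ∀ a b, (x a : C) * φ ((c • X) a b) * (y b : C) =
          φ c * ((x a : C) * φ (X a b) * (y b : C)) := fun a b => by
          rw [Matrix.smul_apply, smul_eq_mul, map_mul]; ring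
        simp only [this, ← Finset.mul_sum, hX, mul_zero]
    obtain ⟨a, ha⟩ := Function.ne_iff.1 hx
    obtain ⟨b, hb⟩ := Function.ne_iff.1 hy
    have h1 := key (Matrix.single a b 1)
    rw [Finset.sum_eq_single a, Finset.sum_eq_single b] at h1
    · simp only [Matrix.single_apply_same, map_one, mul_one, mul_eq_zero] at h1
      rcases h1 with h1 | h1
      · exact ha (Subtype.ext h1)
      · exact hb (Subtype.ext h1)
    · intro b' _ hb'; rw [Matrix.single_apply_of_ne _ _ _ _ _ (by tauto)]; simp
    · simp
    · intro a' _ ha'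
      refine Finset.sum_eq_zero fun b' _ => ?_
      rw [Matrix.single_apply_of_ne _ _ _ _ _ (by tauto)]; simp
    · simp
  have hdetC : ∀ g, φ (ρ g).det = (ρC g).det := fun g => by rw [hρC, RingHom.map_det]
  have htrC : ∀ g, φ (ρ g).trace = (ρC g).trace := fun g => by
    rw [hρC]; simp [Matrix.trace]
  have hdd : ‖(ρC j).det‖ * ‖(ρC j⁻¹).det‖ = 1 := by
    rw [← norm_mul, ← Matrix.det_mul, ← map_mul, mul_inv_cancel, map_one, Matrix.det_one, norm_one]
  have hd0 : 0 < ‖(ρC j).det‖ := by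
    rcases (norm_nonneg (ρC j).det).lt_or_eq with h | h
    · exact h
    · rw [← h, zero_mul] at hdd; exact absurd hdd zero_ne_one
  have hval : ‖φ ((ρ j).trace ^ n * (ρ j⁻¹).det)‖ * ‖(ρC j).det‖ = ‖(ρC j).trace‖ ^ n := by
    rw [map_mul, map_pow, htrC, hdetC, norm_mul, norm_pow, mul_assoc, mul_comm ‖(ρC j⁻¹).det‖, hdd,
      mul_one]
  have h1t : 1 < ‖φ ((ρ j).trace ^ n * (ρ j⁻¹).det)‖ := by
    rcases h with h | h
    · refine lt_of_le_of_lt (one_le_pow₀ ?_) h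
      exact_mod_cast hn0
    · exact h.2
  have hinf : Infinite L := by
    have hmem : φ ((ρ j).trace ^ n * (ρ j⁻¹).det) ∈ L := by
      rw [map_mul, map_pow, htrC, hdetC, hρC, hρC]
      have : ∀ g, (φ.mapMatrix (ρ g)).det ∈ L := fun g => by
        have : (φ.mapMatrix (ρ g)).det = L.subtype (ρL g).det := by
          rw [RingHom.map_det]; rfl
        rw [this]; exact (ρL g).det.2
      refine L.mul_mem (L.pow_mem ?_ _) (this _)
      exact L.sum_mem fun i _ => hL _ _ _
    refine Infinite.of_injective (fun k : ℕ => (⟨_, hmem⟩ : L) ^ k) ?_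
    intro a b hab
    have h2 := congrArg (fun x : L => ‖(x : C)‖) hab
    simp only [SubmonoidClass.coe_pow, norm_pow] at h2
    exact (pow_right_strictMono₀ h1t).injective h2
  obtain ⟨l, v, hv0, hv, hlt⟩ := exists_eig (ρC j) (by
    rcases h with h | ⟨hu, h⟩
    · left; rw [← hn, ← hval]; exact mul_lt_mul_of_pos_right h hd0
    · right; refine ⟨hu, ?_⟩
      rw [← hn, ← hval]; nlinarith)
  refine pp ρL hSI fun B => ?_
  obtain ⟨g, a, b, hg⟩ := eig_unbounded ρC j l v hv0 hv hlt B
  refine ⟨g, a, b, ?_⟩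
  have : ‖(ρC g).det‖ = ‖(ρL g).det‖ := by
    have : (ρC g).det = L.subtype (ρL g).det := by rw [RingHom.map_det]; rfl
    rw [this]; rfl
  rw [this] at hg
  exact hg

end TitsAlt

namespace TitsAlt
open Cardinal in
lemma ext_lemma {k₁ K C : Type*} [Field k₁] [Field K] [Countable K] [Field C] [IsAlgClosed C]
    [Uncountable C] [Algebra k₁ K] (φ₀ : k₁ →+* C) :
    ∃ φ : K →+* C, ∀ x, φ (algebraMap k₁ K x) = φ₀ x := by
  let _ : Algebra k₁ C := φ₀.toAlgebra
  have : Countable k₁ := (algebraMap k₁ K).injective.countable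
  obtain ⟨s, hs⟩ := exists_isTranscendenceBasis k₁ K
  obtain ⟨t, ht⟩ := exists_isTranscendenceBasis k₁ C
  have hcard := IsAlgClosed.cardinal_eq_cardinal_transcendence_basis_of_aleph0_lt _ ht
    (Cardinal.mk_le_aleph0) (Cardinal.aleph0_lt_mk)
  have h2 : ℵ₀ < #C := Cardinal.aleph0_lt_mk
  have h3 : #C = #t := by simpa using hcard
  have : Infinite t := Cardinal.infinite_iff.2 (by rw [← h3]; exact h2.le)
  obtain ⟨f, hf⟩ := exists_injective_nat s
  let e : s ↪ t := (⟨f, hf⟩ : s ↪ ℕ).trans (Infinite.natEmbedding t)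
  let R := Algebra.adjoin k₁ (Set.range ((↑) : s → K))
  let g : R →ₐ[k₁] C := (MvPolynomial.aeval (fun i => ((e i : t) : C))).comp
    (hs.1.aevalEquiv.symm : R →ₐ[k₁] MvPolynomial s k₁)
  have hg : Function.Injective g := by
    have h1 := ht.1.comp e e.injective
    have h2 : Function.Injective (MvPolynomial.aeval (R := k₁) (fun i => ((e i : t) : C))) := h1
    exact h2.comp hs.1.aevalEquiv.symm.injective
  let _ : Algebra R C := g.toRingHom.toAlgebra
  have : Module.IsTorsionFree R C := by
    have : FaithfulSMul R C := (faithfulSMul_iff_algebraMap_injective R C).2 hg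
    infer_instance
  have : Algebra.IsAlgebraic R K := hs.isAlgebraic
  let f : K →ₐ[R] C := IsAlgClosed.lift
  refine ⟨f.toRingHom, fun x => ?_⟩
  have := f.commutes (algebraMap k₁ R x)
  have h2 : algebraMap R C (algebraMap k₁ R x) = algebraMap k₁ C x := g.commutes x
  rw [h2] at this
  exact this
end TitsAlt

namespace TitsAlt
open Polynomial

lemma ext_transc {k K C : Type*} [Field k] [Field K] [Countable K] [Field C] [IsAlgClosed C]
    [Uncountable C] [Algebra k K] [Algebra k C] (t : K) (x : C) (ht : Transcendental k t)
    (hx : Transcendental k x) : ∃ φ : K →+* C, φ t = x := by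
  have h1 : Function.Injective ((aeval t : k[X] →ₐ[k] K) : k[X] →+* K) :=
    transcendental_iff_injective.1 ht
  have h2 : Function.Injective ((aeval x : k[X] →ₐ[k] C) : k[X] →+* C) :=
    transcendental_iff_injective.1 hx
  let i1 : FractionRing k[X] →+* K := IsFractionRing.lift h1
  let i2 : FractionRing k[X] →+* C := IsFractionRing.lift h2
  let _ : Algebra (FractionRing k[X]) K := i1.toAlgebra
  obtain ⟨φ, hφ⟩ := ext_lemma (K := K) i2
  refine ⟨φ, ?_⟩
  have := hφ (algebraMap k[X] _ X)
  have e1 : algebraMap (FractionRing k[X]) K (algebraMap k[X] _ X) = t := by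
    change IsFractionRing.lift h1 _ = _
    rw [IsFractionRing.lift_algebraMap]; simp
  have e2 : i2 (algebraMap k[X] _ X) = x := by
    change IsFractionRing.lift h2 _ = _
    rw [IsFractionRing.lift_algebraMap]; simp
  rw [e1, e2] at this
  exact this

lemma ext_alg {k K C : Type*} [Field k] [Field K] [Countable K] [Field C] [IsAlgClosed C]
    [Uncountable C] [Algebra k K] [Algebra k C] (t : K) (x : C) (ht : IsIntegral k t)
    (hx : aeval x (minpoly k t) = 0) : ∃ φ : K →+* C, φ t = x := by
  let g := (IntermediateField.algHomAdjoinIntegralEquiv k ht (K := C)).symm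
    ⟨x, (mem_aroots).2 ⟨minpoly.ne_zero ht, hx⟩⟩
  obtain ⟨φ, hφ⟩ := ext_lemma (K := K) g.toRingHom
  refine ⟨φ, ?_⟩
  have := hφ (IntermediateField.AdjoinSimple.gen k t)
  rw [IntermediateField.AdjoinSimple.algebraMap_gen] at this
  rw [this]
  exact IntermediateField.algHomAdjoinIntegralEquiv_symm_apply_gen k ht _

lemma unc_of_place (P C : Type*) [NontriviallyNormedField P] [ProperSpace P] [Field C]
    [Algebra P C] : Uncountable C := by
  have h := continuum_le_cardinal_of_nontriviallyNormedField P
  have : Uncountable P := by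
    rw [← Cardinal.aleph0_lt_mk_iff]
    exact lt_of_lt_of_le Cardinal.aleph0_lt_continuum h
  exact (algebraMap P C).injective.uncountable

lemma place_subfield {K : Type*} (P C : Type*) [NontriviallyNormedField P] [ProperSpace P]
    [NormedField C] [NormedAlgebra P C] [Algebra.IsAlgebraic P C] [Field K] (S : Finset K)
    (φ : K →+* C) : ∃ L : Subfield C, ProperSpace L ∧ ∀ s ∈ S, φ s ∈ L := by
  classical
  let L := IntermediateField.adjoin P ((S.image φ : Finset C) : Set C)
  have : FiniteDimensional P L := by
    apply IntermediateField.finiteDimensional_adjoin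
    intro x _
    exact (Algebra.IsAlgebraic.isAlgebraic x).isIntegral
  refine ⟨L.toSubfield, ?_, ?_⟩
  · exact FiniteDimensional.proper P L
  · intro s hs
    exact IntermediateField.subset_adjoin _ _ (by simpa using ⟨s, hs, rfl⟩)

end TitsAlt

namespace TitsAlt
open LaurentSeries Valued
variable (k : Type) [Field k]

noncomputable def intEquiv : PowerSeries k ≃+* 𝒪[k⸨X⸩] :=
  RingEquiv.ofBijective ((HahnSeries.ofPowerSeries ℤ k).codRestrict 𝒪[k⸨X⸩]
    (fun F => (LaurentSeries.val_le_one_iff_eq_coe k _).2 ⟨F, rfl⟩)) <| by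
    constructor
    · intro a b h
      exact HahnSeries.ofPowerSeries_injective (congrArg Subtype.val h)
    · rintro ⟨x, hx⟩
      obtain ⟨F, hF⟩ := (LaurentSeries.val_le_one_iff_eq_coe k _).1 hx
      exact ⟨F, Subtype.ext hF⟩

lemma laurent_nontrivial : (Valued.v : Valuation k⸨X⸩ (WithZero (Multiplicative ℤ))).IsNontrivial := by
  refine ⟨HahnSeries.single 1 1, ?_, ?_⟩
  · simp
  · have := LaurentSeries.valuation_single_zpow k 1
    rw [this]
    decide

noncomputable instance laurentRankOne : (Valued.v : Valuation k⸨X⸩ (WithZero (Multiplicative ℤ))).RankOne := by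
  have := laurent_nontrivial k
  exact (Valuation.nonempty_rankOne_iff_mulArchimedean.2 inferInstance).some

instance : IsDiscreteValuationRing 𝒪[k⸨X⸩] :=
  IsDiscreteValuationRing.RingEquivClass.isDiscreteValuationRing (intEquiv k)

instance [Finite k] : Finite 𝓀[k⸨X⸩] := by
  have e1 := IsLocalRing.ResidueField.mapEquiv (intEquiv k)
  have e2 := PowerSeries.residueFieldOfPowerSeries (k := k)
  exact Finite.of_equiv k (e2.symm.trans e1).toEquiv

lemma laurent_proper [Finite k] : ProperSpace k⸨X⸩ :=
  Valued.integer.properSpace_iff_completeSpace_and_isDiscreteValuationRing_integer_and_finite_residueField.2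
  ⟨inferInstance, inferInstance, inferInstance⟩


lemma transc_of_norm {k C : Type*} [Field k] [Finite k] [NormedField C] [Algebra k C] (x : C)
    (hx : 1 < ‖x‖) : Transcendental k x := by
  intro h
  have h' : IsIntegral k x := h.isIntegral
  have : FiniteDimensional k (IntermediateField.adjoin k {x}) :=
    IntermediateField.adjoin.finiteDimensional h'
  have : Finite (IntermediateField.adjoin k {x}) := Module.finite_of_finite k
  have := Fintype.ofFinite (IntermediateField.adjoin k {x})
  let y := IntermediateField.AdjoinSimple.gen k x
  have hy : (y : C) = x := rfl
  have hne : y ≠ 0 := by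
    rintro h0
    rw [← hy, h0] at hx
    simp at hx
    linarith
  have h1 := FiniteField.pow_card_sub_one_eq_one y hne
  have h2 : x ^ (Fintype.card (IntermediateField.adjoin k {x}) - 1) = 1 := by
    have := congrArg (fun z : IntermediateField.adjoin k {x} => (z : C)) h1
    simpa [hy] using this
  have h3 := congrArg norm h2
  rw [norm_pow, norm_one] at h3
  have h4 : Fintype.card (IntermediateField.adjoin k {x}) - 1 ≠ 0 := by
    have := Fintype.one_lt_card (α := IntermediateField.adjoin k {x})
    omega
  exact (one_lt_pow₀ hx h4).ne' h3

lemma place_laurent {k : Type} {K : Type*} [Field k] [Finite k] [Field K] [Countable K]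
    [Algebra k K] (S : Finset K) (t : K) (ht : Transcendental k t) :
    ∃ (C : Type) (_ : NormedField C) (_ : IsAlgClosed C) (φ : K →+* C) (L : Subfield C),
      ProperSpace L ∧ (∀ s ∈ S, φ s ∈ L) ∧ IsUltrametricDist C ∧ 1 < ‖φ t‖ := by
  have := laurent_proper k
  let C := AlgebraicClosure k⸨X⸩
  let _ : NormedField C := spectralNorm.normedField k⸨X⸩ C
  let _ : NormedAlgebra k⸨X⸩ C := spectralNorm.normedAlgebra k⸨X⸩ C
  have hu : IsUltrametricDist C :=
    IsUltrametricDist.isUltrametricDist_of_forall_norm_add_le_max_norm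
      (isNonarchimedean_spectralNorm (K := k⸨X⸩) (L := C))
  have hunc : Uncountable C := unc_of_place k⸨X⸩ C
  let x : C := algebraMap k⸨X⸩ C (HahnSeries.single (-1) 1)
  have hx : 1 < ‖x‖ := by
    rw [norm_algebraMap', Valued.toNormedField.one_lt_norm_iff,
      LaurentSeries.valuation_single_zpow k (-1)]
    decide
  obtain ⟨φ, hφ⟩ := ext_transc (k := k) t x ht (transc_of_norm x hx)
  obtain ⟨L, hL, hS⟩ := place_subfield k⸨X⸩ C S φ
  exact ⟨C, inferInstance, inferInstance, φ, L, hL, hS, hu, by rw [hφ]; exact hx⟩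

end TitsAlt

namespace TitsAlt
open Polynomial

universe u
lemma residue {k : Type*} {K : Type u} [Field k] [Field K] [Algebra k K] (S : Finset K) :
    ∃ (M : Type u) (_ : Field M) (_ : Algebra k M) (_ : FiniteDimensional k M)
      (π : Algebra.adjoin k (S : Set K) →ₐ[k] M),
      ∀ a b : Algebra.adjoin k (S : Set K), IsAlgebraic k (a : K) → IsAlgebraic k (b : K) →
        π a = π b → a = b := by
  let A := Algebra.adjoin k (S : Set K)
  obtain ⟨m, hm⟩ := Ideal.exists_maximal A
  let _ : Field (A ⧸ m) := Ideal.Quotient.field m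
  have hA : Algebra.FiniteType k A := (Subalgebra.fg_iff_finiteType A).1 (Subalgebra.fg_adjoin_finset S)
  have : Algebra.FiniteType k (A ⧸ m) :=
    hA.of_surjective (Ideal.Quotient.mkₐ k m) (Ideal.Quotient.mkₐ_surjective k m)
  have := finite_of_finite_type_of_isJacobsonRing k (A ⧸ m)
  refine ⟨A ⧸ m, inferInstance, inferInstance, this, Ideal.Quotient.mkₐ k m, ?_⟩
  intro a b ha hb hab
  by_contra hne
  have hc : IsIntegral k ((a : K) - b) := (ha.isIntegral).sub hb.isIntegral
  have hmem : ((a : K) - b)⁻¹ ∈ A := hc.inv_mem (sub_mem a.2 b.2)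
  have hne' : (a : K) - b ≠ 0 := sub_ne_zero.2 fun h => hne (Subtype.ext h)
  have h1 : (a - b) * (⟨_, hmem⟩ : A) = 1 := Subtype.ext (mul_inv_cancel₀ hne')
  have h2 := congrArg (Ideal.Quotient.mkₐ k m) h1
  rw [map_mul, map_sub, hab, sub_self, zero_mul, map_one] at h2
  exact zero_ne_one h2

lemma exists_transc_norm (N : ℝ) : ∃ x : ℂ, Transcendental ℚ x ∧ N < ‖x‖ := by
  by_contra! h
  have h1 : Set.Ioi (|N|) ⊆ {x : ℝ | IsAlgebraic ℚ x} := by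
    intro x hx
    by_contra hx2
    have h2 : Transcendental ℚ (x : ℂ) := by
      intro h3
      apply hx2
      exact (isAlgebraic_algebraMap_iff (A := ℂ) (algebraMap ℝ ℂ).injective).1 h3
    have h4 := h x h2
    rw [Complex.norm_real, Real.norm_eq_abs] at h4
    have : |N| < x := hx
    have := le_abs_self N
    have := le_abs_self x
    linarith
  have h2 := (Algebraic.countable ℚ ℝ).mono h1
  have h3 := Cardinal.mk_Ioi_real |N|
  have h4 := Cardinal.le_aleph0_iff_set_countable.2 h2
  rw [h3] at h4
  exact absurd h4 (not_le.2 Cardinal.aleph0_lt_continuum)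

lemma rat_int (q : ℚ) (h : ∀ (p : ℕ) [Fact p.Prime], ‖(q : ℚ_[p])‖ ≤ 1) :
    ∃ z : ℤ, (z : ℚ) = q := by
  by_cases hd : q.den = 1
  · exact ⟨q.num, Rat.coe_int_num_of_den_eq_one hd⟩
  obtain ⟨p, hp, hpd⟩ := Nat.exists_prime_and_dvd hd
  have : Fact p.Prime := ⟨hp⟩
  exfalso
  have h1 := h p
  have hn : ¬ (p : ℤ) ∣ q.num := by
    intro hpn
    have := Nat.dvd_gcd (Int.natCast_dvd.1 hpn) hpd
    rw [q.reduced] at this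
    exact hp.one_lt.ne' (Nat.dvd_one.1 this)
  have h2 : (q.num : ℚ_[p]) = q * q.den := by
    have := Rat.mul_den_eq_num q
    exact_mod_cast this.symm
  have h3 : ‖((q.den : ℤ) : ℚ_[p])‖ < 1 := (Padic.norm_intCast_lt_one_iff).2 (by exact_mod_cast hpd)
  have h4 : ‖(q.num : ℚ_[p])‖ < 1 := by
    rw [h2, norm_mul]
    have h3' : ‖((q.den : ℕ) : ℚ_[p])‖ < 1 := by exact_mod_cast h3
    nlinarith [norm_nonneg (q : ℚ_[p]), norm_nonneg ((q.den : ℕ) : ℚ_[p])]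
  exact hn (Padic.norm_intCast_lt_one_iff.1 h4)

def unitBall (C : Type*) [NormedField C] [IsUltrametricDist C] : Subring C where
  carrier := {x | ‖x‖ ≤ 1}
  zero_mem' := by simp
  one_mem' := by simp
  add_mem' {a b} ha hb := (IsUltrametricDist.norm_add_le_max a b).trans (max_le ha hb)
  mul_mem' {a b} ha hb := by
    have ha : ‖a‖ ≤ 1 := ha
    have hb : ‖b‖ ≤ 1 := hb
    change ‖a * b‖ ≤ 1
    rw [norm_mul]
    exact mul_le_one₀ ha (norm_nonneg _) hb
  neg_mem' {a} ha := by simpa using ha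

lemma coeff_le_one {C : Type*} [NormedField C] [IsUltrametricDist C] [IsAlgClosed C] (f : C[X])
    (hf : f.Monic) (h : ∀ x, f.IsRoot x → ‖x‖ ≤ 1) (n : ℕ) : ‖f.coeff n‖ ≤ 1 := by
  have hs := (IsAlgClosed.splits f).eq_prod_roots_of_monic hf
  have hl : f ∈ lifts (unitBall C).subtype := by
    rw [hs]
    apply Submonoid.multiset_prod_mem
    intro g hg
    obtain ⟨a, ha, rfl⟩ := Multiset.mem_map.1 hg
    have ha' : ‖a‖ ≤ 1 := h a (isRoot_of_mem_roots ha)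
    refine (lifts_iff_liftsRing _ _).2 ?_
    refine sub_mem ((lifts_iff_liftsRing _ _).1 (X_mem_lifts _)) ((lifts_iff_liftsRing _ _).1 ?_)
    exact C'_mem_lifts ⟨⟨a, ha'⟩, rfl⟩
  obtain ⟨y, hy⟩ := (lifts_iff_coeff_lifts f).1 hl n
  rw [← hy]
  exact y.2

lemma exists_padic {K : Type*} [Field K] [Algebra ℚ K] (t : K) (ht : IsIntegral ℚ t)
    (hn : ¬ IsIntegral ℤ t) : ∃ (p : ℕ) (_ : Fact p.Prime) (x : PadicAlgCl p),
      aeval x (minpoly ℚ t) = 0 ∧ 1 < ‖x‖ := by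
  by_contra! h
  apply hn
  have hmon := minpoly.monic ht
  have hl : minpoly ℚ t ∈ lifts (algebraMap ℤ ℚ) := by
    rw [lifts_iff_coeff_lifts]
    intro n
    obtain ⟨z, hz⟩ := rat_int ((minpoly ℚ t).coeff n) (by
      intro p hp
      have := coeff_le_one ((minpoly ℚ t).map (algebraMap ℚ (PadicAlgCl p))) (hmon.map _)
        (fun x hx => h p hp x (by rwa [IsRoot, eval_map_algebraMap] at hx)) n
      rw [coeff_map] at this
      rw [← PadicAlgCl.norm_extends]
      convert this using 2
      simp)
    exact ⟨z, hz⟩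
  obtain ⟨q, hq, -, hqm⟩ := lifts_and_natDegree_eq_and_monic hl hmon
  refine ⟨q, hqm, ?_⟩
  have h1 := minpoly.aeval ℚ t
  rw [← hq, aeval_map_algebraMap] at h1
  exact h1

lemma closure_le_adjoin (k : Type*) {K : Type*} [Field k] [Field K] [Algebra k K] (S : Set K) :
    (Subring.closure S : Set K) ⊆ Algebra.adjoin k S := by
  have : Subring.closure S ≤ (Algebra.adjoin k S).toSubring :=
    Subring.closure_le.2 Algebra.subset_adjoin
  exact this

lemma place_lemma {K : Type*} [Field K] [Countable K] (S : Finset K) (T : Set K)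
    (hT : T ⊆ Subring.closure (S : Set K)) (hinf : T.Infinite) (N : ℝ) :
    ∃ (C : Type) (_ : NormedField C) (_ : IsAlgClosed C) (φ : K →+* C) (L : Subfield C),
      ProperSpace L ∧ (∀ s ∈ S, φ s ∈ L) ∧
      ∃ t ∈ T, N < ‖φ t‖ ∨ (IsUltrametricDist C ∧ 1 < ‖φ t‖) := by
  obtain ⟨p, hp⟩ := CharP.exists K
  rcases CharP.char_is_prime_or_zero K p with hpp | rfl
  · have : Fact p.Prime := ⟨hpp⟩
    let _ : Algebra (ZMod p) K := ZMod.algebra K p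
    by_cases h : ∃ t ∈ T, Transcendental (ZMod p) t
    · obtain ⟨t, htT, ht⟩ := h
      obtain ⟨C, h1, h2, φ, L, h3, h4, h5, h6⟩ := place_laurent S t ht
      exact ⟨C, h1, h2, φ, L, h3, h4, t, htT, Or.inr ⟨h5, h6⟩⟩
    · exfalso
      push Not at h
      obtain ⟨M, _, _, hfin, π, hπ⟩ := residue (k := ZMod p) S
      have : Finite M := Module.finite_of_finite (ZMod p)
      have hTA := hT.trans (closure_le_adjoin (ZMod p) (S : Set K))
      have : Finite T := Finite.of_injective (fun t : T => π ⟨t, hTA t.2⟩) (by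
        intro a b hab
        have := hπ _ _ (by simpa [Transcendental] using h a a.2)
          (by simpa [Transcendental] using h b b.2) hab
        exact Subtype.ext (congrArg (fun z : Algebra.adjoin (ZMod p) (S : Set K) => (z : K)) this))
      exact hinf (Set.toFinite T)
  · have : CharZero K := CharP.charP_to_charZero K
    let _ : Algebra ℚ K := DivisionRing.toRatAlgebra
    by_cases h : ∃ t ∈ T, Transcendental ℚ t
    · obtain ⟨t, htT, ht⟩ := h
      obtain ⟨x, hx, hN⟩ := exists_transc_norm N
      have : Uncountable ℂ := unc_of_place ℂ ℂ
      obtain ⟨φ, hφ⟩ := ext_transc (k := ℚ) t x ht hx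
      obtain ⟨L, hL, hS⟩ := place_subfield ℂ ℂ S φ
      exact ⟨ℂ, inferInstance, inferInstance, φ, L, hL, hS, t, htT, Or.inl (by rwa [hφ])⟩
    · have halg : ∀ t ∈ T, IsAlgebraic ℚ t := by simpa [Transcendental] using h
      by_cases h2 : ∃ t ∈ T, ¬ IsIntegral ℤ t
      · obtain ⟨t, htT, ht⟩ := h2
        obtain ⟨p, hp, x, hx, hN⟩ := exists_padic t (halg t htT).isIntegral ht
        have : Uncountable (PadicAlgCl p) := unc_of_place ℚ_[p] (PadicAlgCl p)
        obtain ⟨φ, hφ⟩ := ext_alg (k := ℚ) t x (halg t htT).isIntegral hx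
        obtain ⟨L, hL, hS⟩ := place_subfield ℚ_[p] (PadicAlgCl p) S φ
        exact ⟨PadicAlgCl p, inferInstance, inferInstance, φ, L, hL, hS, t, htT,
          Or.inr ⟨inferInstance, by rwa [hφ]⟩⟩
      · push Not at h2
        obtain ⟨M, _, iA, hfin, π, hπ⟩ := residue (k := ℚ) S
        have hTA := hT.trans (closure_le_adjoin ℚ (S : Set K))
        have : CharZero M := (RingHom.charZero_iff (algebraMap ℚ M).injective).1 inferInstance
        have : NumberField M := { to_charZero := this, to_finiteDimensional := by
                                    have e : iA = DivisionRing.toRatAlgebra :=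
                                      Subsingleton.elim _ _
                                    subst e
                                    exact hfin }
        have hinf2 : (Set.range (fun t : T => π ⟨t, hTA t.2⟩)).Infinite := by
          have : Infinite T := hinf.to_subtype
          apply Set.infinite_range_of_injective
          intro a b hab
          have := hπ _ _ (halg a a.2) (halg b b.2) hab
          exact Subtype.ext (congrArg (fun z : Algebra.adjoin ℚ (S : Set K) => (z : K)) this)
        obtain ⟨y, ⟨t, rfl⟩, hy⟩ := hinf2.exists_notMem_finite
          (NumberField.Embeddings.finite_of_norm_le M ℂ N)
        have hintg : IsIntegral ℤ (π ⟨t, hTA t.2⟩) := by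
          have h3 : IsIntegral ℤ (⟨t, hTA t.2⟩ : Algebra.adjoin ℚ (S : Set K)) := by
            obtain ⟨q, hq, hq2⟩ := h2 t t.2
            refine ⟨q, hq, ?_⟩
            apply Subtype.ext
            rw [← Polynomial.aeval_def] at hq2 ⊢
            refine Eq.trans ?_ hq2
            exact (Polynomial.aeval_algHom_apply
              ((Algebra.adjoin ℚ (S : Set K)).val.restrictScalars ℤ) _ q).symm
          exact h3.map (π.restrictScalars ℤ)
        simp only [Set.mem_ofPred_eq, not_and, not_forall, not_le] at hy
        obtain ⟨ψ, hψ⟩ := hy hintg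
        have : Uncountable ℂ := unc_of_place ℂ ℂ
        have hroot : aeval (ψ (π ⟨t, hTA t.2⟩)) (minpoly ℚ (t : K)) = 0 := by
          have h3 : aeval (⟨t, hTA t.2⟩ : Algebra.adjoin ℚ (S : Set K)) (minpoly ℚ (t : K)) = 0 := by
            apply Subtype.ext
            refine (Polynomial.aeval_algHom_apply
              (Algebra.adjoin ℚ (S : Set K)).val _ _).symm.trans ?_
            exact minpoly.aeval ℚ (t : K)
          have h4 := congrArg (ψ.toRatAlgHom.comp π) h3
          rw [← Polynomial.aeval_algHom_apply, map_zero] at h4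
          exact h4
        obtain ⟨φ, hφ⟩ := ext_alg (k := ℚ) (t : K) _ (halg t t.2).isIntegral hroot
        obtain ⟨L, hL, hS⟩ := place_subfield ℂ ℂ S φ
        exact ⟨ℂ, inferInstance, inferInstance, φ, L, hL, hS, t, t.2, Or.inl (by rwa [hφ])⟩

end TitsAlt

namespace TitsAlt
open Matrix

universe u v

lemma entries_mem {Γ K : Type*} [Group Γ] [Field K] {n m : ℕ}
    (ρ : Γ →* Matrix (Fin n) (Fin n) K) (S : Finset K)
    (hS : ∀ g i j, ρ g i j ∈ Subring.closure (S : Set K)) (v : Fin m → Fin n → K)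
    (f : Fin m → ((Fin n → K) →ₗ[K] K)) :
    ∃ S' : Finset K, ∀ g i j, f i (ρ g *ᵥ v j) ∈ Subring.closure (S' : Set K) := by
  classical
  let S1 : Finset K := Finset.univ.image (fun x : Fin m × Fin n => v x.1 x.2)
  let S2 : Finset K := Finset.univ.image
    (fun x : Fin m × Fin n => f x.1 (fun j => if x.2 = j then 1 else 0))
  refine ⟨S ∪ S1 ∪ S2, fun g i j => ?_⟩
  have h0 : Subring.closure (S : Set K) ≤ Subring.closure ((S ∪ S1 ∪ S2 : Finset K) : Set K) :=
    Subring.closure_mono (by push_cast; intro x hx; exact Or.inl (Or.inl hx))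
  have h1 : ∀ j k, v j k ∈ Subring.closure ((S ∪ S1 ∪ S2 : Finset K) : Set K) := by
    intro j k
    apply Subring.subset_closure
    push_cast
    refine Or.inl (Or.inr ?_)
    exact Finset.mem_coe.2 (Finset.mem_image.2 ⟨(j, k), Finset.mem_univ _, rfl⟩)
  have h2 : ∀ i k, f i (fun j => if k = j then 1 else 0) ∈
      Subring.closure ((S ∪ S1 ∪ S2 : Finset K) : Set K) := by
    intro j k
    apply Subring.subset_closure
    push_cast
    refine Or.inr ?_
    exact Finset.mem_coe.2 (Finset.mem_image.2 ⟨(j, k), Finset.mem_univ _, rfl⟩)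
  rw [LinearMap.pi_apply_eq_sum_univ]
  refine sum_mem fun k _ => ?_
  rw [smul_eq_mul]
  refine mul_mem ?_ (h2 i k)
  rw [Matrix.mulVec, dotProduct]
  exact sum_mem fun l _ => mul_mem (h0 (hS g k l)) (h1 j l)

def MainAt (K : Type v) [Field K] (n : ℕ) : Prop :=
  ∀ (Γ : Type u) [Group Γ], (¬ ∃ f : FreeGroup (Fin 2) →* Γ, Function.Injective f) →
    ∀ (ρ : Γ →* Matrix (Fin n) (Fin n) K) (S : Finset K),
    (∀ g i j, ρ g i j ∈ Subring.closure (S : Set K)) → IdRep ρ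

lemma smaller {Γ : Type u} {K : Type v} {V : Type*} [Group Γ] [Field K] [AddCommGroup V]
    [Module K V] {m : ℕ} (IH : MainAt.{u} K m)
    (hf : ¬ ∃ f : FreeGroup (Fin 2) →* Γ, Function.Injective f) (τ : Γ →* Module.End K V)
    (b : Module.Basis (Fin m) K V) (S : Finset K)
    (hS : ∀ g i j, b.repr (τ g (b j)) i ∈ Subring.closure (S : Set K)) : IdRep τ := by
  let ρ : Γ →* Matrix (Fin m) (Fin m) K :=
    ((LinearMap.toMatrixAlgEquiv b : Module.End K V →* Matrix (Fin m) (Fin m) K)).comp τ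
  obtain ⟨α, w, hw, h⟩ := IH Γ hf ρ S (by
    intro g i j
    have : ρ g i j = b.repr (τ g (b j)) i := LinearMap.toMatrixAlgEquiv_apply b _ _ _
    rw [this]
    exact hS g i j)
  refine ⟨α, w, hw, fun c => ?_⟩
  have h1 := h c
  exact (LinearMap.toMatrixAlgEquiv b).injective (h1.trans (map_one _).symm)

lemma step_reducible {Γ : Type u} {K : Type v} [Group Γ] [Field K] {n : ℕ}
    (IH : ∀ m < n, MainAt.{u} K m)
    (hf : ¬ ∃ f : FreeGroup (Fin 2) →* Γ, Function.Injective f)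
    (ρ : Γ →* Matrix (Fin n) (Fin n) K) (S : Finset K)
    (hS : ∀ g i j, ρ g i j ∈ Subring.closure (S : Set K))
    (W : Submodule K (Fin n → K)) (hW : ∀ g, ∀ w ∈ W, ρ g *ᵥ w ∈ W) (h0 : W ≠ ⊥) (h1 : W ≠ ⊤) :
    IdRep ρ := by
  have hsum := Submodule.finrank_quotient_add_finrank W
  rw [Module.finrank_fin_fun] at hsum
  have hWpos : 0 < Module.finrank K W := by
    rw [Module.finrank_pos_iff]
    exact Submodule.nontrivial_iff_ne_bot.2 h0
  have hQpos : 0 < Module.finrank K ((Fin n → K) ⧸ W) := by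
    rw [Module.finrank_pos_iff]
    exact Submodule.Quotient.nontrivial_iff.2 h1
  let τ₁ : Γ →* Module.End K W :=
    { toFun := fun g => (Matrix.toLin' (ρ g)).restrict (fun w hw => by
        rw [Matrix.toLin'_apply]; exact hW g w hw)
      map_one' := by
        ext w : 2
        simp [LinearMap.restrict_apply]
      map_mul' := fun a b => by
        ext w : 2
        simp [LinearMap.restrict_apply, Matrix.mulVec_mulVec] }
  let τ₂ : Γ →* Module.End K ((Fin n → K) ⧸ W) :=
    { toFun := fun g => W.mapQ W (Matrix.toLin' (ρ g)) (fun w hw => by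
        rw [Submodule.mem_comap, Matrix.toLin'_apply]; exact hW g w hw)
      map_one' := by
        apply LinearMap.ext
        intro x
        obtain ⟨x, rfl⟩ := Submodule.Quotient.mk_surjective W x
        rw [Submodule.mapQ_apply]
        simp
      map_mul' := fun a b => by
        apply LinearMap.ext
        intro x
        obtain ⟨x, rfl⟩ := Submodule.Quotient.mk_surjective W x
        rw [Module.End.mul_apply, Submodule.mapQ_apply, Submodule.mapQ_apply, Submodule.mapQ_apply]
        simp [Matrix.mulVec_mulVec] }
  have hτ₁ : ∀ g (w : W), ((τ₁ g w : W) : Fin n → K) = ρ g *ᵥ (w : Fin n → K) := fun g w => rfl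
  have hτ₂ : ∀ g (x : Fin n → K), τ₂ g (Submodule.Quotient.mk x) =
    Submodule.Quotient.mk (ρ g *ᵥ x) := fun g x => rfl
  have i1 : IdRep τ₁ := by
    let b := Module.finBasis K W
    choose f hfx using fun i => LinearMap.exists_extend (b.coord i)
    obtain ⟨S', hS'⟩ := entries_mem ρ S hS (fun j => (b j : Fin n → K)) f
    refine smaller (IH _ (by omega)) hf τ₁ b S' fun g i j => ?_
    have := hS' g i j
    rw [← hτ₁] at this
    have e := LinearMap.congr_fun (hfx i) (τ₁ g (b j))
    change f i (τ₁ g (b j) : W) = b.repr (τ₁ g (b j)) i at e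
    rwa [← e]
  have i2 : IdRep τ₂ := by
    let b := Module.finBasis K ((Fin n → K) ⧸ W)
    choose x hx using fun j => Submodule.Quotient.mk_surjective W (b j)
    obtain ⟨S', hS'⟩ := entries_mem ρ S hS x (fun i => (b.coord i).comp W.mkQ)
    refine smaller (IH _ (by omega)) hf τ₂ b S' fun g i j => ?_
    have := hS' g i j
    rw [← hx j, hτ₂]
    exact this
  refine IdRep.of_two ρ τ₁ τ₂ i1 i2 ?_
  have key : ∀ a b, τ₁ a = 1 → τ₂ b = 1 → ∀ x, ρ a *ᵥ (ρ b *ᵥ x) = ρ a *ᵥ x + (ρ b *ᵥ x - x) := by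
    intro a b ha hb x
    have hw : ρ b *ᵥ x - x ∈ W := by
      rw [← Submodule.Quotient.eq, ← hτ₂, hb, Module.End.one_apply]
    have := hτ₁ a ⟨_, hw⟩
    rw [ha] at this
    change ρ b *ᵥ x - x = ρ a *ᵥ (ρ b *ᵥ x - x) at this
    rw [Matrix.mulVec_sub] at this
    rw [this]; abel
  intro a b ha1 ha2 hb1 hb2
  apply Matrix.toLin'.injective
  apply LinearMap.ext
  intro x
  rw [Matrix.toLin'_apply, Matrix.toLin'_apply, ← Matrix.mulVec_mulVec, ← Matrix.mulVec_mulVec,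
    key a b ha1 hb2, key b a hb1 ha2]
  abel

theorem main_thm (K : Type v) [Field K] [Countable K] [IsAlgClosed K] (n : ℕ) :
    MainAt.{u} K n := by
  induction n using Nat.strong_induction_on with
  | _ n IH =>
  intro Γ _ hf ρ S hS
  by_cases hred : ∃ H : Subgroup Γ, H.FiniteIndex ∧ ∃ W : Submodule K (Fin n → K),
      (∀ g ∈ H, ∀ w ∈ W, ρ g *ᵥ w ∈ W) ∧ W ≠ ⊥ ∧ W ≠ ⊤
  · obtain ⟨H, hH, W, hW, h0, h1⟩ := hred
    apply IdRep.of_finiteIndex ρ H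
    refine step_reducible IH ?_ (ρ.comp H.subtype) S (fun g i j => hS g i j) W
      (fun g => hW g g.2) h0 h1
    rintro ⟨f, hf'⟩
    exact hf ⟨H.subtype.comp f, H.subtype_injective.comp hf'⟩
  · push Not at hred
    rcases Nat.eq_zero_or_pos n with rfl | hn
    · exact idRep_of_comm ρ fun a b => Subsingleton.elim _ _
    have : Nonempty (Fin n) := ⟨⟨0, hn⟩⟩
    have hspan : ∀ H : Subgroup Γ, H.FiniteIndex →
        Submodule.span K (ρ '' (H : Set Γ)) = ⊤ := by
      intro H hH
      have := burnside (ρ.comp H.subtype) (fun W hW => by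
        by_cases h0 : W = ⊥
        · exact Or.inl h0
        · exact Or.inr (hred H hH W (fun g hg w hw => hW ⟨g, hg⟩ w hw) h0))
      rw [← this]
      congr 1
      ext x
      constructor
      · rintro ⟨g, hg, rfl⟩
        exact ⟨⟨g, hg⟩, rfl⟩
      · rintro ⟨g, rfl⟩
        exact ⟨g, g.2, rfl⟩
    by_cases hfin : (Set.range fun j => (ρ j).trace ^ Fintype.card (Fin n) * (ρ j⁻¹).det).Finite
    · refine idRep_of_finite ρ ?_ hfin
      have := hspan ⊤ inferInstance
      rwa [Subgroup.coe_top, Set.image_univ] at this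
    · exfalso
      obtain ⟨C, _, _, φ, L, hL, hSL, t, ⟨j, rfl⟩, ht⟩ := place_lemma S _ (by
        rintro _ ⟨j, rfl⟩
        refine mul_mem (pow_mem (sum_mem fun i _ => hS j i i) _) ?_
        rw [Matrix.det_apply]
        refine sum_mem fun σ _ => ?_
        rw [Units.smul_def]
        refine zsmul_mem (prod_mem fun i _ => hS _ _ _) _) hfin
        ((Fintype.card (Fin n) : ℝ) ^ Fintype.card (Fin n))
      refine hf (free_of_place ρ hspan φ L ?_ j ht)
      intro g i j
      have h1 : Subring.closure (S : Set K) ≤ L.toSubring.comap φ :=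
        Subring.closure_le.2 fun s hs => hSL s hs
      exact h1 (hS g i j)

lemma gens_mem {Γ K ι : Type*} [Group Γ] [Field K] [Fintype ι] [DecidableEq ι]
    (ρ : Γ →* Matrix ι ι K) (G : Finset Γ) (hG : Subgroup.closure (G : Set Γ) = ⊤) :
    ∃ S : Finset K, ∀ g i j, ρ g i j ∈ Subring.closure (S : Set K) := by
  classical
  let S1 : Finset K := G.biUnion fun g => Finset.univ.image (fun x : ι × ι => ρ g x.1 x.2)
  let S2 : Finset K := G.biUnion fun g => Finset.univ.image (fun x : ι × ι => ρ g⁻¹ x.1 x.2)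
  refine ⟨S1 ∪ S2, fun g => ?_⟩
  have hg : g ∈ Subgroup.closure (G : Set Γ) := by rw [hG]; trivial
  have hmul : ∀ a b : Γ, (∀ i j, ρ a i j ∈ Subring.closure ((S1 ∪ S2 : Finset K) : Set K)) →
      (∀ i j, ρ b i j ∈ Subring.closure ((S1 ∪ S2 : Finset K) : Set K)) →
      ∀ i j, ρ (a * b) i j ∈ Subring.closure ((S1 ∪ S2 : Finset K) : Set K) := by
    intro a b ha hb i j
    rw [map_mul, Matrix.mul_apply]
    exact sum_mem fun k _ => mul_mem (ha _ _) (hb _ _)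
  have h1 : ∀ x ∈ G, ∀ i j, ρ x i j ∈ Subring.closure ((S1 ∪ S2 : Finset K) : Set K) := by
    intro x hx i j
    apply Subring.subset_closure
    refine Finset.mem_coe.2 (Finset.mem_union_left _ (Finset.mem_biUnion.2 ⟨x, hx, ?_⟩))
    exact Finset.mem_image.2 ⟨(i, j), Finset.mem_univ _, rfl⟩
  have h2 : ∀ x ∈ G, ∀ i j, ρ x⁻¹ i j ∈ Subring.closure ((S1 ∪ S2 : Finset K) : Set K) := by
    intro x hx i j
    apply Subring.subset_closure
    refine Finset.mem_coe.2 (Finset.mem_union_right _ (Finset.mem_biUnion.2 ⟨x, hx, ?_⟩))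
    exact Finset.mem_image.2 ⟨(i, j), Finset.mem_univ _, rfl⟩
  induction hg using Subgroup.closure_induction'' with
  | mem x hx => exact h1 x hx
  | inv_mem x hx => exact h2 x hx
  | one =>
    intro i j
    rw [map_one, Matrix.one_apply]
    split_ifs
    · exact one_mem _
    · exact zero_mem _
  | mul x y _ _ hx hy => exact hmul x y hx hy

theorem matrix_thm {Γ F : Type*} [Group Γ] [Field F] {n : ℕ}
    (ρ : Γ →* Matrix (Fin n) (Fin n) F) (hρ : Function.Injective ρ) (hfg : Group.FG Γ)
    (hf : ¬ ∃ f : FreeGroup (Fin 2) →* Γ, Function.Injective f) :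
    ∃ (m : ℕ) (w : FreeGroup (Fin m)), 1 ≤ m ∧ w ≠ 1 ∧
      ∀ c : Fin m → Γ, FreeGroup.lift c w = 1 := by
  classical
  obtain ⟨G, hG⟩ := Group.fg_def.1 hfg
  obtain ⟨S, hS⟩ := gens_mem ρ G hG
  let K₀ := Subfield.closure (S : Set F)
  have hc : Countable K₀ := by
    rw [← Cardinal.mk_le_aleph0_iff]
    refine (Subfield.cardinalMk_closure_le_max _).trans (max_le ?_ le_rfl)
    exact Cardinal.mk_le_aleph0
  let K := AlgebraicClosure K₀
  have hcK : Countable K := by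
    rw [← Cardinal.mk_le_aleph0_iff]
    exact (Algebra.IsAlgebraic.cardinalMk_le_max K₀ K).trans
      (max_le Cardinal.mk_le_aleph0 le_rfl)
  have hmem : ∀ g i j, ρ g i j ∈ K₀ := fun g i j => by
    have : Subring.closure (S : Set F) ≤ K₀.toSubring :=
      Subring.closure_le.2 Subfield.subset_closure
    exact this (hS g i j)
  let ρ₀ : Γ →* Matrix (Fin n) (Fin n) K₀ :=
    { toFun := fun g => Matrix.of fun i j => ⟨ρ g i j, hmem g i j⟩
      map_one' := by
        ext i j
        simp [Matrix.one_apply]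
        split_ifs <;> simp
      map_mul' := fun a b => by
        ext i j
        simp [Matrix.mul_apply] }
  let ρ₁ : Γ →* Matrix (Fin n) (Fin n) K :=
    (algebraMap K₀ K).mapMatrix.toMonoidHom.comp ρ₀
  have hinj : Function.Injective ρ₁ := by
    intro a b hab
    apply hρ
    ext i j
    have h1 := congrFun (congrFun hab i) j
    have h2 : ρ₀ a i j = ρ₀ b i j := (algebraMap K₀ K).injective h1
    exact congrArg Subtype.val h2
  obtain ⟨S', hS'⟩ := gens_mem ρ₁ G hG
  exact IdRep.to_fin ρ₁ hinj (main_thm K n Γ hf ρ₁ S' hS')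

end TitsAlt

theorem no_free_subgroup_iff_group_identity
    {F R : Type*} [Field F] [Ring R] [Algebra F R] [FiniteDimensional F R]
    (N : Subgroup Rˣ) (hfg : N.FG) :
    (¬ ∃ f : FreeGroup (Fin 2) →* N, Function.Injective f) ↔
      ∃ (m : ℕ) (w : FreeGroup (Fin m)), 1 ≤ m ∧ w ≠ 1 ∧
        ∀ c : Fin m → N, FreeGroup.lift c w = 1 := by
  constructor
  · intro hf
    let b := Module.finBasis F R
    let ρ : N →* Matrix (Fin (Module.finrank F R)) (Fin (Module.finrank F R)) F :=
      ((Algebra.leftMulMatrix b : R →* _).comp (Units.coeHom R)).comp N.subtype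
    have hρ : Function.Injective ρ := by
      intro x y hxy
      have h1 : Algebra.leftMulMatrix b ((x : Rˣ) : R) = Algebra.leftMulMatrix b ((y : Rˣ) : R) :=
        hxy
      exact Subtype.ext (Units.ext (Algebra.leftMulMatrix_injective b h1))
    exact TitsAlt.matrix_thm ρ hρ ((Group.fg_iff_subgroup_fg N).2 hfg) hf
  · rintro ⟨m, w, -, hw, hid⟩ ⟨f, hf⟩
    exact TitsAlt.not_identity_of_free f hf m w hw hid
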